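/- arXiv:2207.06575 — 2 statements merged into one kernel-verified Lean document; each statement's English description precedes it below -/
import Mathlib

section
/- Let F be a finite extension of ℚ₂ that contains a primitive cube root of unity. Then there is no Galois extension of F with Galois group isomorphic to the symmetric group S₄; that is, ν(F,S₄) = 0. -/
/-- `nu F G` is the number of intermediate fields `K` of a fixed algebraic closure of `F`
such that `K/F` is a finite Galois extension with Galois group isomorphic to `G`. -/
noncomputable def nu (F : Type*) [Field F] (G : Type*) [Group G] : ℕ :=
  Nat.card {K : IntermediateField F (AlgebraicClosure F) //
    FiniteDimensional F K ∧ IsGalois F K ∧ Nonempty ((K ≃ₐ[F] K) ≃* G)}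

/-!
Let `G` be a group of automorphisms of a valued field `L` preserving the valuation, let `ζ : L` be
a `G`-fixed primitive `n`-th root of unity, and suppose the residue field is finite. Automorphisms
of a finite field commute, so every `t ∈ [G, G]` lies in the inertia group. If moreover `t ^ n = 1`,
then `t • x / x` is congruent to a power of `ζ` that depends only on the valuation of `x`, hence
does not change when `t` is replaced by a conjugate. So `⁅g, t⁆` lies in the wild inertia group,
which has no torsion of order prime to the residue characteristic. In `S₄` this fails for `n = 3`,
a `3`-cycle `t` and a transposition `g` inverting `t`.
-/

open scoped NNReal commutatorElement
open IsLocalRing (ResidueField maximalIdeal residue)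

theorem mul_comm_ringAut_of_finite {k : Type*} [Field k] [Finite k] (σ τ : RingAut k) :
    σ * τ = τ * σ := by
  obtain ⟨a, ha⟩ := (Units.map (σ : k →* k)).map_cyclic
  obtain ⟨b, hb⟩ := (Units.map (τ : k →* k)).map_cyclic
  ext x
  obtain rfl | hx := eq_or_ne x 0
  · simp only [map_zero]
  · have units_comm : Units.map (σ : k →* k) (Units.map (τ : k →* k) (Units.mk0 x hx)) =
        Units.map (τ : k →* k) (Units.map (σ : k →* k) (Units.mk0 x hx)) := by
      rw [ha, hb, ha, hb, zpow_comm]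
    exact congrArg Units.val units_comm

section Valuation

variable {L Γ₀ : Type*} [Field L] [LinearOrderedCommGroupWithZero Γ₀] {v : Valuation L Γ₀}

theorem mem_maximalIdeal_valuationSubring_iff {x : v.valuationSubring} :
    x ∈ maximalIdeal v.valuationSubring ↔ v (x : L) < 1 := by
  rw [ValuationSubring.valuation_lt_one_iff,
    ← v.isEquiv_valuation_valuationSubring.lt_one_iff_lt_one]

theorem exists_valuation_sub_pow_lt_one {n : ℕ} [NeZero n] {ζ u : L} (hζ : IsPrimitiveRoot ζ n)
    (hu : v (u ^ n - 1) < 1) : ∃ i : ℕ, v (u - ζ ^ i) < 1 := by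
  have factorization : u ^ n - 1 = ∏ ξ ∈ Polynomial.nthRootsFinset n (1 : L), (u - ξ) := by
    simpa [Polynomial.eval_prod] using
      congrArg (Polynomial.eval u) (Polynomial.X_pow_sub_one_eq_prod (NeZero.pos n) hζ)
  obtain ⟨ξ, hξ, hlt⟩ : ∃ ξ ∈ Polynomial.nthRootsFinset n (1 : L), v (u - ξ) < 1 := by
    contrapose! hu
    rw [factorization, map_prod]
    exact Finset.one_le_prod' hu
  obtain ⟨i, -, rfl⟩ :=
    hζ.eq_pow_of_pow_eq_one ((Polynomial.mem_nthRootsFinset (NeZero.pos n) 1).mp hξ)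
  exact ⟨i, hlt⟩

end Valuation

/-- The valuation `v` is invariant under the group `G` acting on the field by automorphisms.
This replaces uniqueness of the extension of a complete valuation to a Galois extension. -/
class IsInvariantValuation (G : Type*) {L Γ₀ : Type*} [Group G] [Field L] [MulSemiringAction G L]
    [LinearOrderedCommGroupWithZero Γ₀] (v : Valuation L Γ₀) : Prop where
  map_smul : ∀ (g : G) (x : L), v (g • x) = v x

section Inertia

variable (G : Type*) {L Γ₀ : Type*} [Group G] [Field L] [MulSemiringAction G L]
  [LinearOrderedCommGroupWithZero Γ₀] (v : Valuation L Γ₀) [IsInvariantValuation G v]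

instance : MulSemiringAction G v.valuationSubring where
  smul g x := ⟨g • (x : L), (IsInvariantValuation.map_smul g (x : L)).trans_le x.2⟩
  one_smul x := Subtype.ext (one_smul G (x : L))
  mul_smul g h x := Subtype.ext (mul_smul g h (x : L))
  smul_zero g := Subtype.ext (smul_zero g)
  smul_add g x y := Subtype.ext (smul_add g (x : L) y)
  smul_one g := Subtype.ext (smul_one g)
  smul_mul g x y := Subtype.ext (smul_mul' g (x : L) y)

/-- The inertia group of `v`: the elements of `G` acting trivially on the residue field. -/
def inertiaGroup : Subgroup G :=
  (maximalIdeal v.valuationSubring).toAddSubgroup.inertia G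

/-- The wild inertia group of `v`, described as the elements of `G` acting trivially on the graded
ring of `L`, so that it needs neither a uniformizer nor a residue characteristic. -/
def wildInertiaGroup : Subgroup G where
  carrier := {g | ∀ x : L, x ≠ 0 → v (g • x - x) < v x}
  one_mem' x hx := by simpa [zero_lt_iff] using hx
  mul_mem' {g h} hg hh x hx := by
    have hgh := hg (h • x) ((smul_ne_zero_iff_ne h).mpr hx)
    rw [IsInvariantValuation.map_smul] at hgh
    simpa only [mul_smul, sub_add_sub_cancel] using v.map_add_lt hgh (hh x hx)
  inv_mem' {g} hg x hx := by
    rw [← IsInvariantValuation.map_smul g, smul_sub, smul_inv_smul, v.map_sub_swap]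
    exact hg x hx

variable {G v} {g t : G} {x y : L}

theorem mem_inertiaGroup_iff : g ∈ inertiaGroup G v ↔ ∀ x : L, v x ≤ 1 → v (g • x - x) < 1 :=
  Subtype.forall.trans <| forall₂_congr fun _ _ ↦ mem_maximalIdeal_valuationSubring_iff

theorem commutator_le_inertiaGroup [Finite (ResidueField v.valuationSubring)] :
    commutator G ≤ inertiaGroup G v := by
  let ρ := MulSemiringAction.toRingAut G (ResidueField v.valuationSubring)
  have commutator_le_ker : commutator G ≤ ρ.ker := Subgroup.commutator_le.mpr fun g _ h _ ↦ by
    rw [MonoidHom.mem_ker, map_commutatorElement, commutatorElement_eq_one_iff_mul_comm]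
    exact mul_comm_ringAut_of_finite _ _
  intro t ht x
  have residue_fixed : residue _ (t • x) = residue _ x :=
    RingEquiv.congr_fun (MonoidHom.mem_ker.mp (commutator_le_ker ht)) (residue _ x)
  exact Ideal.Quotient.eq.mp residue_fixed

theorem smul_sub_mul_lt_of_valuation_eq {w : L} (ht : t ∈ inertiaGroup G v)
    (hx : v (t • x - w * x) < v x) (hxy : v y = v x) : v (t • y - w * y) < v y := by
  have hx0 : v x ≠ 0 := (zero_le.trans_lt hx).ne'
  have hwx : v (w * x) = v x := by
    rw [v.map_sub_swap, ← IsInvariantValuation.map_smul t x] at hx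
    rw [v.map_eq_of_sub_lt hx, IsInvariantValuation.map_smul]
  obtain ⟨c, rfl⟩ : ∃ c, y = c * x := ⟨y / x, (div_mul_cancel₀ y (v.ne_zero_iff.mp hx0)).symm⟩
  have hc : v c = 1 := by simpa [hx0] using hxy
  have decomposition : t • (c * x) - w * (c * x) =
      t • c * (t • x - w * x) + (t • c - c) * (w * x) := by
    rw [smul_mul']; ring
  rw [decomposition, hxy]
  apply v.map_add_lt
  · rwa [map_mul, IsInvariantValuation.map_smul, hc, one_mul]
  · rw [map_mul, hwx]
    exact mul_lt_of_lt_one_left (zero_lt_iff.mpr hx0) (mem_inertiaGroup_iff.mp ht c hc.le)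

theorem valuation_pow_smul_sub_lt {u : L} (ht : t ∈ inertiaGroup G v) (hx : x ≠ 0)
    (hu : t • x = u * x) (k : ℕ) : v (t ^ k • x - u ^ k * x) < v x := by
  have hx0 : 0 < v x := v.pos_iff.mpr hx
  have hu1 : v u = 1 := by
    have := IsInvariantValuation.map_smul (v := v) t x
    simpa [hu, hx0.ne'] using this
  induction k with
  | zero => simpa using hx0
  | succ k ih =>
    have decomposition : t ^ (k + 1) • x - u ^ (k + 1) * x =
        t • (t ^ k • x - u ^ k * x) + (t • u ^ k - u ^ k) * (u * x) := by
      rw [smul_sub, smul_mul', hu, pow_succ' t, mul_smul]; ring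
    rw [decomposition]
    apply v.map_add_lt
    · rwa [IsInvariantValuation.map_smul]
    · rw [map_mul, map_mul, hu1, one_mul]
      exact mul_lt_of_lt_one_left hx0 (mem_inertiaGroup_iff.mp ht _ (by simp [hu1]))

theorem exists_smul_sub_pow_mul_lt {n : ℕ} [NeZero n] {ζ : L} (hζ : IsPrimitiveRoot ζ n)
    (ht : t ∈ inertiaGroup G v) (htn : t ^ n = 1) (hx : x ≠ 0) :
    ∃ i : ℕ, v (t • x - ζ ^ i * x) < v x := by
  have hx0 : 0 < v x := v.pos_iff.mpr hx
  have hu : t • x = t • x / x * x := (div_mul_cancel₀ _ hx).symm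
  have hun : v ((t • x / x) ^ n - 1) < 1 := by
    have := valuation_pow_smul_sub_lt ht hx hu n
    rwa [htn, one_smul, v.map_sub_swap, ← sub_one_mul, map_mul,
      mul_lt_iff_lt_one_left hx0] at this
  obtain ⟨i, hi⟩ := exists_valuation_sub_pow_lt_one hζ hun
  refine ⟨i, ?_⟩
  rw [hu, ← sub_mul, map_mul]
  exact mul_lt_of_lt_one_left hx0 hi

theorem conj_smul_sub_mul_lt {w : L} (hw : g • w = w) (ht : t ∈ inertiaGroup G v)
    (hx : v (t • x - w * x) < v x) : v ((g * t * g⁻¹) • x - w * x) < v x := by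
  have hgx : v (g⁻¹ • x) = v x := IsInvariantValuation.map_smul _ _
  have conj_eq : (g * t * g⁻¹) • x - w * x = g • (t • g⁻¹ • x - w * g⁻¹ • x) := by
    rw [smul_sub, smul_mul', hw, smul_inv_smul, mul_smul, mul_smul]
  rw [conj_eq, IsInvariantValuation.map_smul, ← hgx]
  exact smul_sub_mul_lt_of_valuation_eq ht hx hgx

theorem commutatorElement_mem_wildInertiaGroup {n : ℕ} [NeZero n] {ζ : L}
    (hζ : IsPrimitiveRoot ζ n) (hgζ : g • ζ = ζ) (ht : t ∈ inertiaGroup G v) (htn : t ^ n = 1) :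
    ⁅g, t⁆ ∈ wildInertiaGroup G v := by
  intro x hx
  have hx' : t⁻¹ • x ≠ 0 := (smul_ne_zero_iff_ne t⁻¹).mpr hx
  obtain ⟨i, hi⟩ := exists_smul_sub_pow_mul_lt hζ ht htn hx'
  have hconj := conj_smul_sub_mul_lt (g := g) (by rw [smul_pow', hgζ]) ht hi
  have := v.map_sub_lt hconj hi
  rwa [sub_sub_sub_cancel_right, ← mul_smul, ← commutatorElement_def, smul_inv_smul,
    IsInvariantValuation.map_smul] at this

theorem eq_one_of_mem_wildInertiaGroup [FaithfulSMul G L] {n : ℕ} (hn : v (n : L) = 1)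
    (ht : t ∈ wildInertiaGroup G v) (htn : t ^ n = 1) : t = 1 := by
  refine FaithfulSMul.eq_of_smul_eq_smul fun x : L ↦ ?_
  rw [one_smul, ← sub_eq_zero]
  by_contra hd
  set d := t • x - x
  have pow_smul_approx (k : ℕ) : v (t ^ k • x - x - k * d) < v d := by
    induction k with
    | zero => simpa [zero_lt_iff] using hd
    | succ k ih =>
      have telescope : t ^ (k + 1) • x - x - (k + 1 : ℕ) * d =
          (t ^ k • x - x - k * d) + (t ^ k • d - d) := by
        rw [smul_sub, ← mul_smul, ← pow_succ]; push_cast; ring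
      rw [telescope]
      exact v.map_add_lt ih (pow_mem ht k d hd)
  simpa [htn, hn] using pow_smul_approx n

theorem commutatorElement_eq_one_of_isPrimitiveRoot [FaithfulSMul G L]
    [Finite (ResidueField v.valuationSubring)] {n : ℕ} {ζ : L} (hn : v (n : L) = 1)
    (hζ : IsPrimitiveRoot ζ n) (hgζ : g • ζ = ζ) (ht : t ∈ commutator G) (htn : t ^ n = 1)
    (hgtn : ⁅g, t⁆ ^ n = 1) : ⁅g, t⁆ = 1 := by
  have : NeZero n := ⟨by rintro rfl; simp at hn⟩
  exact eq_one_of_mem_wildInertiaGroup hn (commutatorElement_mem_wildInertiaGroup hζ hgζ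
    (commutator_le_inertiaGroup ht) htn) hgtn

end Inertia

section LocallyCompact

open scoped NormedField Valued in
theorem finite_residueField_of_properSpace (L : Type*) [NontriviallyNormedField L]
    [IsUltrametricDist L] [ProperSpace L] :
    Finite (ResidueField (NormedField.valuation (K := L)).valuationSubring) := by
  let : (Valued.v : Valuation L ℝ≥0).RankOne :=
    inferInstanceAs (NormedField.valuation (K := L)).RankOne
  have integers_eq_closedBall : (𝒪[L] : Set L) = Metric.closedBall 0 1 := by
    ext x
    simp [Valued.integer.mem_iff]
  have : CompactSpace 𝒪[L] :=
    isCompact_iff_compactSpace.mp (integers_eq_closedBall ▸ isCompact_closedBall (0 : L) 1)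
  open Valued.integer in
  exact (compactSpace_iff_completeSpace_and_isDiscreteValuationRing_and_finite_residueField.mp
    this).2.2

variable (K : Type*) [NontriviallyNormedField K] [IsUltrametricDist K] [ProperSpace K]

theorem exists_valuation_extending_norm (L : Type*) [Field L] [Algebra K L]
    [FiniteDimensional K L] :
    ∃ v : Valuation L ℝ≥0, (∀ a : K, v (algebraMap K L a) = ‖a‖₊) ∧
      (∀ (σ : L ≃ₐ[K] L) (x : L), v (σ x) = v x) ∧
      Finite (ResidueField v.valuationSubring) := by
  let : NontriviallyNormedField L := spectralNorm.nontriviallyNormedField K L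
  let : NormedAlgebra K L := spectralNorm.normedAlgebra K L
  have : IsUltrametricDist L := .isUltrametricDist_of_isNonarchimedean_norm
    (isNonarchimedean_spectralNorm (K := K) (L := L))
  have : ProperSpace L := FiniteDimensional.proper K L
  exact ⟨NormedField.valuation, fun a ↦ nnnorm_algebraMap' L a,
    fun σ x ↦ NNReal.eq (spectralNorm_eq_of_equiv σ x).symm, finite_residueField_of_properSpace L⟩

variable {F : Type*} [Field F] [Algebra K F] [FiniteDimensional K F] {n : ℕ}

theorem commutatorElement_algEquiv_eq_one (hn : ‖(n : K)‖ = 1)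
    (hζ : ∃ ζ : F, IsPrimitiveRoot ζ n) {L : Type*} [Field L] [Algebra F L] [Algebra K L]
    [IsScalarTower K F L] [FiniteDimensional F L] {g t : L ≃ₐ[F] L}
    (ht : t ∈ commutator (L ≃ₐ[F] L)) (htn : t ^ n = 1) (hgtn : ⁅g, t⁆ ^ n = 1) : ⁅g, t⁆ = 1 := by
  obtain ⟨ζ, hζ⟩ := hζ
  have : FiniteDimensional K L := .trans K F L
  obtain ⟨v, hvK, hv, _⟩ := exists_valuation_extending_norm K L
  have : IsInvariantValuation (L ≃ₐ[F] L) v := ⟨fun σ ↦ hv (σ.restrictScalars K)⟩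
  have hvn : v (n : L) = 1 := by
    rw [← map_natCast (algebraMap K L), hvK]
    exact NNReal.eq hn
  exact commutatorElement_eq_one_of_isPrimitiveRoot hvn
    (hζ.map_of_injective (algebraMap F L).injective) (g.commutes ζ) ht htn hgtn

theorem stmt7_general (hn : ‖(n : K)‖ = 1) (hζ : ∃ ζ : F, IsPrimitiveRoot ζ n) {G : Type*}
    [Group G] {g t : G} (ht : t ∈ commutator G) (htn : t ^ n = 1) (hgtn : ⁅g, t⁆ ^ n = 1)
    (hgt : ⁅g, t⁆ ≠ 1) : nu F G = 0 := by
  rw [nu, Nat.card_eq_zero]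
  refine .inl ⟨fun ⟨M, _, _, ⟨φ⟩⟩ ↦ hgt ?_⟩
  have commutator_le : commutator G ≤ (commutator (M ≃ₐ[F] M)).comap φ.symm.toMonoidHom :=
    Subgroup.commutator_le.mpr fun a _ b _ ↦ by
      rw [Subgroup.mem_comap, map_commutatorElement]
      exact Subgroup.commutator_mem_commutator trivial trivial
  have commutes : ⁅φ.symm g, φ.symm t⁆ = 1 :=
    commutatorElement_algEquiv_eq_one K hn hζ (commutator_le ht)
      (by rw [← map_pow, htn, map_one])
      (by rw [← map_commutatorElement, ← map_pow, hgtn, map_one])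
  rwa [← map_commutatorElement, map_eq_one_iff _ φ.symm.injective] at commutes

end LocallyCompact

open Equiv in
set_option maxRecDepth 10000 in
theorem exists_commutatorElement_ne_one_perm_fin_four : ∃ g t : Perm (Fin 4),
    t ∈ commutator (Perm (Fin 4)) ∧ t ^ 3 = 1 ∧ ⁅g, t⁆ ^ 3 = 1 ∧ ⁅g, t⁆ ≠ 1 :=
  ⟨swap 0 1, ⁅swap 0 1, swap 1 2⁆, Subgroup.commutator_mem_commutator trivial trivial,
    by decide, by decide, by decide⟩

theorem stmt7 (F : Type*) [Field F] [Algebra ℚ_[2] F] [FiniteDimensional ℚ_[2] F]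
    (hμ3 : ∃ ζ : F, IsPrimitiveRoot ζ 3) :
    nu F (Equiv.Perm (Fin 4)) = 0 := by
  obtain ⟨g, t, ht, ht3, hgt3, hgt⟩ := exists_commutatorElement_ne_one_perm_fin_four
  exact stmt7_general ℚ_[2] (Padic.norm_natCast_eq_one_iff.mpr (by norm_num)) hμ3 ht ht3 hgt3 hgt
end

section
/- Let F be a finite extension of ℚ₂ of degree m, residue degree f, that does not contain a primitive cube root of unity, and suppose it is NOT the case that (F does not contain a primitive fourth root of unity, m is even and f = 1). Then the number of Galois extensions of F with Galois group isomorphic to the symmetric group S₄ is ν(F,S₄) = 2^{2m} − 1. -/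
/-
Let `r i` be the roots of a cubic with group `S₃` and let `K = F(r 0)`. The `S₄`-extensions whose
cubic resolvent field is the Galois closure of `K` are obtained by adjoining square roots of the
conjugates of a nonsquare `α` of `K` whose norm is a square, and `α` is determined up to squares:
the three square roots `z i` and the four roots of a quartic are linear combinations of one another,
with signs as coefficients. Hence these extensions correspond to the nontrivial classes of
`{u ∈ Kˣ | N u is a square} / Kˣ²`. As `[K : F]` is odd, the norm is onto modulo squares, so this
group has order `[Kˣ : Kˣ²] / [Fˣ : Fˣ²] = 2 ^ (3m + 2) / 2 ^ (m + 2) = 2 ^ (2m)`.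

Without cube roots of unity there is exactly one `S₃`-extension of `F`. Here `[Fˣ : Fˣ³] = 3`, and
the cube `v` of a Lagrange resolvent lies in `F`: otherwise `F(v)/F` is quadratic and does not
contain `μ₃`, so the norm identifies cubes there with cubes in `F`, while `N v` is a cube and `v`
is not. The extension is thus the splitting field of `X³ - a` for any `a` which is not a cube.
-/

open Polynomial IntermediateField

/-! ### Power classes in local fields -/

theorem index_range_powMonoidHom_eq_of_injective {A G : Type*} [CommGroup A] [CommGroup G]
    (φ : G →* A) (hφ : Function.Injective φ) (hindex : φ.range.index ≠ 0) (n : ℕ) :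
    (powMonoidHom n : A →* A).range.index =
      (powMonoidHom n : G →* G).range.index * φ.range.relIndex (powMonoidHom n : A →* A).ker := by
  have hmap : φ.range.map (powMonoidHom n) = (powMonoidHom n : G →* G).range.map φ := by
    ext x
    simp [Subgroup.mem_map]
  have hindex_map := Subgroup.index_map φ.range (powMonoidHom n : A →* A)
  rw [hmap, Subgroup.index_map_of_injective _ hφ] at hindex_map
  have hsup : φ.range.relIndex (powMonoidHom n : A →* A).ker *
      (φ.range ⊔ (powMonoidHom n : A →* A).ker).index = φ.range.index := by
    rw [← Subgroup.relIndex_sup_left, Subgroup.relIndex_mul_index le_sup_left]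
  have hsup_ne : (φ.range ⊔ (powMonoidHom n : A →* A).ker).index ≠ 0 :=
    right_ne_zero_of_mul (hsup ▸ hindex)
  apply mul_left_cancel₀ hsup_ne
  rw [← hindex_map, ← hsup]
  ring

theorem relIndex_map_eq_of_le {A : Type*} [AddGroup A] {T : A →+ A}
    (hT : Function.Injective T) {H K : AddSubgroup A} (hle : H ≤ K) (hH : H.map T ≤ H)
    (hK : K.map T ≤ K) (hindex : H.relIndex K ≠ 0) :
    (H.map T).relIndex H = (K.map T).relIndex K := by
  apply mul_right_cancel₀ hindex
  rw [AddSubgroup.relIndex_mul_relIndex _ _ _ hH hle,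
    ← AddSubgroup.relIndex_mul_relIndex _ _ _ (AddSubgroup.map_mono hle) hK,
    AddSubgroup.relIndex_map_map_of_injective _ _ hT, mul_comm]

theorem relIndex_map_eq_of_commensurable {A : Type*} [AddGroup A] {T : A →+ A}
    (hT : Function.Injective T) {H K : AddSubgroup A} (hH : H.map T ≤ H) (hK : K.map T ≤ K)
    (hHK : H.relIndex K ≠ 0) (hKH : K.relIndex H ≠ 0) :
    (H.map T).relIndex H = (K.map T).relIndex K := by
  have hinf : (H ⊓ K).map T ≤ H ⊓ K :=
    (AddSubgroup.map_inf_le H K T).trans (inf_le_inf hH hK)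
  rw [← relIndex_map_eq_of_le hT inf_le_left hinf hH (by rwa [AddSubgroup.inf_relIndex_left]),
    ← relIndex_map_eq_of_le hT inf_le_right hinf hK (by rwa [AddSubgroup.inf_relIndex_right])]

theorem relIndex_ne_zero_of_isOpen_of_isCompact {A : Type*} [AddGroup A] [TopologicalSpace A]
    [IsTopologicalAddGroup A] {H K : AddSubgroup A} (hH : IsOpen (H : Set A))
    (hK : IsCompact (K : Set A)) : H.relIndex K ≠ 0 := by
  have : CompactSpace K := isCompact_iff_compactSpace.mp hK
  have : Finite (K ⧸ H.addSubgroupOf K) :=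
    AddSubgroup.quotient_finite_of_isOpen _ (hH.preimage continuous_subtype_val)
  exact AddSubgroup.index_ne_zero_of_finite

theorem index_range_powMonoidHom_int (n : ℕ) :
    (powMonoidHom n : Multiplicative ℤ →* Multiplicative ℤ).range.index = n := by
  have hrange : (powMonoidHom n : Multiplicative ℤ →* Multiplicative ℤ).range =
      AddSubgroup.toSubgroup (AddSubgroup.zmultiples (n : ℤ)) := by
    ext x
    constructor
    · rintro ⟨y, rfl⟩
      exact ⟨y.toAdd, by simp [mul_comm]⟩
    · rintro ⟨y, hy⟩
      refine ⟨Multiplicative.ofAdd y, Multiplicative.toAdd.injective ?_⟩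
      rw [← hy]
      simp [mul_comm]
  rw [hrange, AddSubgroup.index_toSubgroup, Int.index_zmultiples, Int.natAbs_natCast]

theorem index_range_powMonoidHom_prod (G H : Type*) [CommGroup G] [CommGroup H] (n : ℕ) :
    (powMonoidHom n : G × H →* G × H).range.index =
      (powMonoidHom n : G →* G).range.index * (powMonoidHom n : H →* H).range.index := by
  have hrange : (powMonoidHom n : G × H →* G × H).range =
      (powMonoidHom n : G →* G).range.prod (powMonoidHom n : H →* H).range := by
    ext ⟨x, y⟩
    simp [Subgroup.mem_prod]
  rw [hrange, Subgroup.index_prod]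

section PadicInt

variable (p : ℕ) [Fact p.Prime]

theorem index_range_nsmul_padicInt {n : ℕ} (hn : n ≠ 0) :
    (nsmulAddMonoidHom n : ℤ_[p] →+ ℤ_[p]).range.index = p ^ padicValNat p n := by
  have hrange : (nsmulAddMonoidHom n : ℤ_[p] →+ ℤ_[p]).range =
      (PadicInt.toZModPow (padicValNat p n) : ℤ_[p] →+* _).toAddMonoidHom.ker := by
    ext x
    have hn' : (n : ℚ_[p]) ≠ 0 := Nat.cast_ne_zero.mpr hn
    change _ ↔ x ∈ RingHom.ker (PadicInt.toZModPow _)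
    rw [PadicInt.ker_toZModPow, ← PadicInt.norm_le_pow_iff_mem_span_pow,
      ← Padic.valuation_natCast, ← Padic.norm_eq_zpow_neg_valuation hn']
    constructor
    · rintro ⟨y, rfl⟩
      rw [nsmulAddMonoidHom_apply, nsmul_eq_mul, norm_mul]
      exact mul_le_of_le_one_right (norm_nonneg _) y.norm_le_one
    · intro hx
      have hdiv : ‖(x : ℚ_[p]) / n‖ ≤ 1 := by
        rw [norm_div]
        exact div_le_one_of_le₀ hx (norm_nonneg _)
      obtain ⟨y, hy⟩ : ∃ y : ℤ_[p], (y : ℚ_[p]) = x / n := ⟨⟨_, hdiv⟩, rfl⟩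
      refine ⟨y, PadicInt.ext ?_⟩
      rw [nsmulAddMonoidHom_apply, nsmul_eq_mul, PadicInt.coe_mul, PadicInt.coe_natCast, hy,
        mul_div_cancel₀ _ hn']
  rw [hrange, AddSubgroup.index_ker,
    AddMonoidHom.range_eq_top.mpr (ZMod.ringHom_surjective (PadicInt.toZModPow _))]
  simp

theorem index_range_nsmul_pi_padicInt {n : ℕ} (hn : n ≠ 0) (d : ℕ) :
    (nsmulAddMonoidHom n : (Fin d → ℤ_[p]) →+ (Fin d → ℤ_[p])).range.index =
      p ^ (padicValNat p n * d) := by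
  have hrange : (nsmulAddMonoidHom n : (Fin d → ℤ_[p]) →+ (Fin d → ℤ_[p])).range =
      AddSubgroup.pi Set.univ fun _ => (nsmulAddMonoidHom n : ℤ_[p] →+ ℤ_[p]).range := by
    ext x
    simp only [AddMonoidHom.mem_range, AddSubgroup.mem_pi, Set.mem_univ, true_imp_iff]
    exact ⟨fun ⟨y, hy⟩ i => ⟨y i, congrFun hy i⟩,
      fun h => ⟨fun i => (h i).choose, funext fun i => (h i).choose_spec⟩⟩
  rw [hrange, AddSubgroup.index_pi]
  simp [index_range_nsmul_padicInt p hn, pow_mul]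

end PadicInt

theorem index_ne_zero_of_isOpen_of_isCompact {G : Type*} [Group G] [TopologicalSpace G]
    [IsTopologicalGroup G] {H : Subgroup G} (hH : IsOpen (H : Set G)) {K : Set G}
    (hK : IsCompact K) (hHK : ∀ x, ∃ h ∈ H, x * h ∈ K) : H.index ≠ 0 := by
  have := QuotientGroup.discreteTopology hH
  have himage : ((↑) : G → G ⧸ H) '' K = Set.univ := by
    refine Set.eq_univ_of_forall fun q => ?_
    obtain ⟨x, rfl⟩ := QuotientGroup.mk_surjective q
    obtain ⟨h, hh, hxh⟩ := hHK x
    exact ⟨x * h, hxh, QuotientGroup.mk_mul_of_mem x hh⟩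
  have hcompact : IsCompact (Set.univ : Set (G ⧸ H)) :=
    himage ▸ hK.image QuotientGroup.continuous_mk
  have : Finite (G ⧸ H) := Set.finite_univ_iff.mp hcompact.finite_of_discrete
  exact Subgroup.index_ne_zero_of_finite

section Ultrametric

variable (E : Type*) [NormedField E] [IsUltrametricDist E]

/-- The ring of integers of an ultrametric normed field, as an additive subgroup. -/
def unitBall : AddSubgroup E :=
  (IsUltrametricDist.closedBall_openAddSubgroup E one_pos).toAddSubgroup

variable {E}

theorem mem_unitBall {x : E} : x ∈ unitBall E ↔ ‖x‖ ≤ 1 := mem_closedBall_zero_iff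

theorem coe_unitBall : (unitBall E : Set E) = Metric.closedBall 0 1 := rfl

theorem isOpen_unitBall : IsOpen (unitBall E : Set E) :=
  (IsUltrametricDist.closedBall_openAddSubgroup E one_pos).isOpen

theorem norm_add_le_of_ultrametric {x y : E} {r : ℝ} (hx : ‖x‖ ≤ r) (hy : ‖y‖ ≤ r) :
    ‖x + y‖ ≤ r :=
  (IsUltrametricDist.norm_add_le_max x y).trans (max_le hx hy)

theorem norm_eq_one_of_norm_sub_one_lt_one {x : E} (hx : ‖x - 1‖ < 1) : ‖x‖ = 1 := by
  have h := IsUltrametricDist.norm_add_eq_max_of_norm_ne_norm (x := x - 1) (y := 1)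
    (by rw [norm_one]; exact hx.ne)
  rwa [sub_add_cancel, norm_one, max_eq_right hx.le] at h

theorem map_nsmul_unitBall_le (n : ℕ) :
    (unitBall E).map (nsmulAddMonoidHom n) ≤ unitBall E := by
  rintro _ ⟨x, hx, rfl⟩
  exact (unitBall E).nsmul_mem hx n

theorem mem_map_nsmul_unitBall {n : ℕ} (hn : (n : E) ≠ 0) {x : E} :
    x ∈ (unitBall E).map (nsmulAddMonoidHom n) ↔ ‖x‖ ≤ ‖(n : E)‖ := by
  simp only [AddSubgroup.mem_map, mem_unitBall, nsmulAddMonoidHom_apply, nsmul_eq_mul]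
  constructor
  · rintro ⟨y, hy, rfl⟩
    rw [norm_mul]
    exact mul_le_of_le_one_right (norm_nonneg _) hy
  · intro hx
    refine ⟨x / n, ?_, mul_div_cancel₀ _ hn⟩
    rw [norm_div]
    exact div_le_one_of_le₀ hx (norm_nonneg _)

/-- The group of units of the ring of integers that are congruent to `1` modulo `c`. -/
def congrUnits (c : E) : Subgroup Eˣ where
  carrier := {u | ‖(u : E)‖ = 1 ∧ ‖(u : E) - 1‖ ≤ ‖c‖}
  one_mem' := by simp
  mul_mem' {u v} hu hv := by
    refine ⟨by rw [Units.val_mul, norm_mul, hu.1, hv.1, one_mul], ?_⟩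
    have h : ((u * v : Eˣ) : E) - 1 = u * (v - 1) + (u - 1) := by push_cast; ring
    rw [h]
    exact norm_add_le_of_ultrametric (by rw [norm_mul, hu.1, one_mul]; exact hv.2) hu.2
  inv_mem' {u} hu := by
    refine ⟨by rw [Units.val_inv_eq_inv_val, norm_inv, hu.1, inv_one], ?_⟩
    have h : ((u⁻¹ : Eˣ) : E) - 1 = -((u : E)⁻¹ * (u - 1)) := by
      rw [Units.val_inv_eq_inv_val]
      field_simp [u.ne_zero]
      ring
    rw [h, norm_neg, norm_mul, norm_inv, hu.1, inv_one, one_mul]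
    exact hu.2

theorem mem_congrUnits {c : E} {u : Eˣ} (hc : ‖c‖ < 1) :
    u ∈ congrUnits c ↔ ‖(u : E) - 1‖ ≤ ‖c‖ :=
  and_iff_right_of_imp fun h => norm_eq_one_of_norm_sub_one_lt_one (h.trans_lt hc)

theorem exists_mem_congrUnits {c x : E} (hc : ‖c‖ < 1) (hx : ‖x - 1‖ ≤ ‖c‖) :
    ∃ u ∈ congrUnits c, (u : E) = x := by
  have hx0 : x ≠ 0 := by
    rw [← norm_ne_zero_iff, norm_eq_one_of_norm_sub_one_lt_one (hx.trans_lt hc)]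
    exact one_ne_zero
  exact ⟨Units.mk0 x hx0, (mem_congrUnits hc).mpr hx, rfl⟩

theorem norm_sub_one_div_le {c : E} (u : congrUnits c) : ‖((u : Eˣ) - 1 : E) / c‖ ≤ 1 := by
  rw [norm_div]
  exact div_le_one_of_le₀ u.2.2 (norm_nonneg _)

/-- The homomorphism `1 + c x ↦ x mod n` from the units congruent to `1` modulo `c` to the
integers modulo `n`; it is multiplicative because `n` divides `c`. -/
def congrUnitsLog {n : ℕ} (hn : (n : E) ≠ 0) {c : E} (hc : c ≠ 0) (hcn : ‖c‖ ≤ ‖(n : E)‖) :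
    congrUnits c →* Multiplicative
      (unitBall E ⧸ ((unitBall E).map (nsmulAddMonoidHom n)).addSubgroupOf (unitBall E)) :=
  MonoidHom.mk' (fun u => Multiplicative.ofAdd (QuotientAddGroup.mk
      ⟨((u : Eˣ) - 1 : E) / c, mem_unitBall.mpr (norm_sub_one_div_le u)⟩)) fun u v => by
    rw [← ofAdd_add, ← QuotientAddGroup.mk_add, EmbeddingLike.apply_eq_iff_eq, eq_comm,
      QuotientAddGroup.eq, AddSubgroup.mem_addSubgroupOf, mem_map_nsmul_unitBall hn]
    have h : -(((u : Eˣ) - 1 : E) / c + ((v : Eˣ) - 1 : E) / c) + ((u * v : Eˣ) - 1 : E) / c =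
        ((u : Eˣ) - 1 : E) / c * ((v : Eˣ) - 1 : E) := by
      push_cast
      field_simp
      ring
    change ‖-(((u : Eˣ) - 1 : E) / c + ((v : Eˣ) - 1 : E) / c) + ((u * v : Eˣ) - 1 : E) / c‖ ≤ _
    rw [h, norm_mul]
    exact (mul_le_of_le_one_left (norm_nonneg _) (norm_sub_one_div_le u)).trans
      (v.2.2.trans hcn)

theorem ker_congrUnitsLog {n : ℕ} (hn : (n : E) ≠ 0) {c : E} (hc : c ≠ 0)
    (hcn : ‖c‖ ≤ ‖(n : E)‖) :
    (congrUnitsLog hn hc hcn).ker = (congrUnits ((n : E) * c)).subgroupOf (congrUnits c) := by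
  ext u
  have hc' : 0 < ‖c‖ := norm_pos_iff.mpr hc
  rw [MonoidHom.mem_ker, Subgroup.mem_subgroupOf]
  change Multiplicative.ofAdd (QuotientAddGroup.mk _) = 1 ↔ _ ∧ _
  rw [ofAdd_eq_one, QuotientAddGroup.eq_zero_iff, AddSubgroup.mem_addSubgroupOf,
    mem_map_nsmul_unitBall hn, norm_div, div_le_iff₀ hc', ← norm_mul, and_iff_right u.2.1]

theorem congrUnitsLog_surjective {n : ℕ} (hn : (n : E) ≠ 0) {c : E} (hc : c ≠ 0)
    (hcn : ‖c‖ ≤ ‖(n : E)‖) (hc1 : ‖c‖ < 1) :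
    Function.Surjective (congrUnitsLog hn hc hcn) := by
  intro q
  obtain ⟨⟨x, hx⟩, hq⟩ := QuotientAddGroup.mk_surjective q.toAdd
  obtain ⟨u, hu, hux⟩ := exists_mem_congrUnits (x := 1 + c * x) hc1 (by
    rw [add_sub_cancel_left, norm_mul]
    exact mul_le_of_le_one_right (norm_nonneg _) (mem_unitBall.mp hx))
  refine ⟨⟨u, hu⟩, Multiplicative.toAdd.injective (Eq.trans ?_ hq)⟩
  refine congrArg QuotientAddGroup.mk (Subtype.ext ?_)
  change (u - 1 : E) / c = x
  rw [hux, add_sub_cancel_left, mul_div_cancel_left₀ _ hc]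

theorem relIndex_congrUnits {n : ℕ} (hn : (n : E) ≠ 0) {c : E} (hc : c ≠ 0)
    (hcn : ‖c‖ ≤ ‖(n : E)‖) (hc1 : ‖c‖ < 1) :
    (congrUnits ((n : E) * c)).relIndex (congrUnits c) =
      ((unitBall E).map (nsmulAddMonoidHom n)).relIndex (unitBall E) := by
  rw [Subgroup.relIndex, ← ker_congrUnitsLog hn hc hcn, Subgroup.index_ker,
    MonoidHom.range_eq_top.mpr (congrUnitsLog_surjective hn hc hcn hc1), Subgroup.card_top]
  rfl

theorem norm_pow_sub_pow_sub_le {n : ℕ} {c u v : E} (hc : ‖c‖ < 1) (hu : ‖u - 1‖ ≤ ‖c‖)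
    (hv : ‖v - 1‖ ≤ ‖c‖) : ‖u ^ n - v ^ n - n * (u - v)‖ ≤ ‖c‖ * ‖u - v‖ := by
  obtain ⟨u, hu', rfl⟩ := exists_mem_congrUnits hc hu
  obtain ⟨v, hv', rfl⟩ := exists_mem_congrUnits hc hv
  have hfactor : (u : E) ^ n - v ^ n - n * (u - v) =
      (∑ i ∈ Finset.range n, ((u : E) ^ i * (v : E) ^ (n - 1 - i) - 1)) * (u - v) := by
    rw [Finset.sum_sub_distrib, sub_mul, geom_sum₂_mul]
    simp
  rw [hfactor, norm_mul]
  gcongr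
  refine IsUltrametricDist.norm_sum_le_of_forall_le_of_nonneg (norm_nonneg _) fun i _ => ?_
  exact mod_cast ((congrUnits c).mul_mem ((congrUnits c).pow_mem hu' i)
    ((congrUnits c).pow_mem hv' (n - 1 - i))).2

theorem norm_pow_sub_pow_eq {n : ℕ} {c u v : E} (hc : ‖c‖ < 1) (hcn : ‖c‖ < ‖(n : E)‖)
    (hu : ‖u - 1‖ ≤ ‖c‖) (hv : ‖v - 1‖ ≤ ‖c‖) : ‖u ^ n - v ^ n‖ = ‖(n : E)‖ * ‖u - v‖ := by
  rcases eq_or_ne u v with rfl | huv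
  · simp
  have h : ‖u ^ n - v ^ n - n * (u - v)‖ < ‖(n : E) * (u - v)‖ := by
    rw [norm_mul]
    exact (norm_pow_sub_pow_sub_le hc hu hv).trans_lt
      (mul_lt_mul_of_pos_right hcn (norm_pos_iff.mpr (sub_ne_zero.mpr huv)))
  have := IsUltrametricDist.norm_add_eq_max_of_norm_ne_norm h.ne
  rwa [sub_add_cancel, max_eq_right h.le, norm_mul] at this

-- Newton's iteration `u ↦ u - (u ^ n - w) / n` is a contraction of the ball `1 + c𝒪`.
theorem exists_pow_eq_of_norm_sub_one_le [CompleteSpace E] {n : ℕ} (hn : (n : E) ≠ 0) {c w : E}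
    (hc : ‖c‖ < 1) (hcn : ‖c‖ < ‖(n : E)‖) (hw : ‖w - 1‖ ≤ ‖(n : E) * c‖) :
    ∃ u : E, ‖u - 1‖ ≤ ‖c‖ ∧ u ^ n = w := by
  have hn' : 0 < ‖(n : E)‖ := norm_pos_iff.mpr hn
  set T : E → E := fun u => u - (u ^ n - w) / n
  have hT (u v : E) (hu : ‖u - 1‖ ≤ ‖c‖) (hv : ‖v - 1‖ ≤ ‖c‖) :
      ‖T u - T v‖ ≤ ‖c‖ / ‖(n : E)‖ * ‖u - v‖ := by
    have h : T u - T v = -((u ^ n - v ^ n - n * (u - v)) / n) := by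
      simp only [T]
      field_simp
      ring
    rw [h, norm_neg, norm_div, div_mul_eq_mul_div]
    gcongr
    exact norm_pow_sub_pow_sub_le hc hu hv
  have hmaps : Set.MapsTo T (Metric.closedBall 1 ‖c‖) (Metric.closedBall 1 ‖c‖) := by
    intro u hu
    rw [mem_closedBall_iff_norm] at hu ⊢
    have h : T u - 1 = (T u - T 1) + (w - 1) / n := by
      simp only [T]
      ring
    rw [h]
    refine norm_add_le_of_ultrametric ((hT u 1 hu (by simp)).trans ?_) ?_
    · exact (mul_le_of_le_one_left (norm_nonneg _) (div_le_one_of_le₀ hcn.le hn'.le)).trans hu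
    · rwa [norm_div, div_le_iff₀ hn', mul_comm, ← norm_mul]
  have hcontract : ContractingWith (‖c‖₊ / ‖(n : E)‖₊) (hmaps.restrict T _ _) :=
    ⟨(div_lt_one (by exact_mod_cast hn')).mpr hcn, LipschitzWith.of_dist_le_mul fun u v => by
      simpa [dist_eq_norm, Subtype.dist_eq] using
        hT u v (mem_closedBall_iff_norm.mp u.2) (mem_closedBall_iff_norm.mp v.2)⟩
  obtain ⟨u, hu, hfix, -⟩ := hcontract.exists_fixedPoint' Metric.isClosed_closedBall.isComplete
    hmaps (Metric.mem_closedBall_self (norm_nonneg c)) (edist_ne_top _ _)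
  refine ⟨u, mem_closedBall_iff_norm.mp hu, ?_⟩
  have hzero : (u ^ n - w) / n = 0 := sub_eq_self.mp hfix
  exact sub_eq_zero.mp ((div_eq_zero_iff.mp hzero).resolve_right hn)

theorem map_powMonoidHom_congrUnits [CompleteSpace E] {n : ℕ} (hn : (n : E) ≠ 0) {c : E}
    (hc : ‖c‖ < 1) (hcn : ‖c‖ < ‖(n : E)‖) :
    (congrUnits c).map (powMonoidHom n) = congrUnits ((n : E) * c) := by
  ext w
  constructor
  · rintro ⟨u, hu, rfl⟩
    refine ⟨by simp [hu.1], ?_⟩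
    have h := norm_pow_sub_pow_eq hc hcn hu.2 (v := 1) (by simp)
    rw [one_pow] at h
    rw [powMonoidHom_apply, Units.val_pow_eq_pow_val, h, norm_mul]
    gcongr
    exact hu.2
  · intro hw
    obtain ⟨u, hu, hpow⟩ := exists_pow_eq_of_norm_sub_one_le hn hc hcn hw.2
    obtain ⟨v, hv, rfl⟩ := exists_mem_congrUnits hc hu
    exact ⟨v, hv, Units.ext (by simpa using hpow)⟩

end Ultrametric

theorem isOpenEmbedding_padicInt_coe (p : ℕ) [Fact p.Prime] :
    Topology.IsOpenEmbedding ((↑) : ℤ_[p] → ℚ_[p]) := by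
  have hball : Metric.closedBall (0 : ℚ_[p]) 1 = {x | ‖x‖ ≤ 1} := by
    ext x
    rw [mem_closedBall_zero_iff, Set.mem_ofPred_eq]
  exact (hball ▸ IsUltrametricDist.isOpen_closedBall 0 one_ne_zero).isOpenEmbedding_subtypeVal

theorem isCompact_units_norm_mem_Icc {E : Type*} [NormedField E] [ProperSpace E] {r : ℝ}
    (hr : 0 < r) : IsCompact {u : Eˣ | ‖(u : E)‖ ∈ Set.Icc r 1} := by
  have hK : IsCompact {x : E | ‖x‖ ∈ Set.Icc r 1} :=
    (isCompact_closedBall 0 1).of_isClosed_subset (isClosed_Icc.preimage continuous_norm)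
      fun x hx => mem_closedBall_zero_iff.mpr hx.2
  refine Units.isEmbedding_val₀.isInducing.isCompact_preimage' hK fun x hx => ?_
  exact ⟨Units.mk0 x (norm_pos_iff.mp (hr.trans_le hx.1)), rfl⟩

section PadicNormed

variable {p : ℕ} [Fact p.Prime] {E : Type*} [NormedField E] [NormedAlgebra ℚ_[p] E]

theorem norm_natCast_padicAlgebra (n : ℕ) : ‖(n : E)‖ = ‖(n : ℚ_[p])‖ := by
  rw [← map_natCast (algebraMap ℚ_[p] E), norm_algebraMap']

variable (p E) in
theorem exists_addMonoidHom_padicInt_isOpenEmbedding [FiniteDimensional ℚ_[p] E] :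
    ∃ φ : (Fin (Module.finrank ℚ_[p] E) → ℤ_[p]) →+ E, Topology.IsOpenEmbedding φ := by
  let e : (Fin (Module.finrank ℚ_[p] E) → ℚ_[p]) ≃L[ℚ_[p]] E :=
    ContinuousLinearEquiv.ofFinrankEq (by simp)
  exact ⟨e.toLinearEquiv.toLinearMap.toAddMonoidHom.comp
      (PadicInt.Coe.ringHom.toAddMonoidHom.compLeft _),
    e.toHomeomorph.isOpenEmbedding.comp
      (Topology.IsOpenEmbedding.piMap fun _ => isOpenEmbedding_padicInt_coe p)⟩

-- The unit ball is commensurable with a lattice `ℤ_[p] ^ d`, on which the index is clear.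
theorem relIndex_map_nsmul_unitBall [FiniteDimensional ℚ_[p] E] [IsUltrametricDist E] {n : ℕ}
    (hn : n ≠ 0) :
    ((unitBall E).map (nsmulAddMonoidHom n)).relIndex (unitBall E) =
      p ^ (padicValNat p n * Module.finrank ℚ_[p] E) := by
  have : CharZero E := charZero_of_injective_algebraMap (algebraMap ℚ_[p] E).injective
  have := FiniteDimensional.proper ℚ_[p] E
  obtain ⟨φ, hφ⟩ := exists_addMonoidHom_padicInt_isOpenEmbedding p E
  have hlattice_compact : IsCompact (φ.range : Set E) := isCompact_range hφ.continuous
  have hball_compact : IsCompact (unitBall E : Set E) := by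
    rw [coe_unitBall]
    exact isCompact_closedBall 0 1
  have hmap : φ.range.map (nsmulAddMonoidHom n) = (nsmulAddMonoidHom n).range.map φ := by
    rw [AddMonoidHom.range_eq_map, AddMonoidHom.range_eq_map, AddSubgroup.map_map,
      AddSubgroup.map_map]
    exact congrArg (AddSubgroup.map · ⊤) (AddMonoidHom.ext fun x => (map_nsmul φ n x).symm)
  have hlattice_le : φ.range.map (nsmulAddMonoidHom n) ≤ φ.range :=
    hmap ▸ AddMonoidHom.range_eq_map φ ▸ AddSubgroup.map_mono le_top
  rw [← relIndex_map_eq_of_commensurable (nsmul_right_injective hn) hlattice_le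
      (map_nsmul_unitBall_le n)
      (relIndex_ne_zero_of_isOpen_of_isCompact hφ.isOpen_range hball_compact)
      (relIndex_ne_zero_of_isOpen_of_isCompact isOpen_unitBall hlattice_compact), hmap,
    AddMonoidHom.range_eq_map φ, AddSubgroup.relIndex_map_map_of_injective _ _ hφ.injective,
    AddSubgroup.relIndex_top_right, index_range_nsmul_pi_padicInt p hn]

variable (p) in
theorem natCast_padic_ne_zero : (p : E) ≠ 0 := by
  rw [← norm_ne_zero_iff, norm_natCast_padicAlgebra (p := p), norm_ne_zero_iff]
  exact Nat.cast_ne_zero.mpr (NeZero.ne p)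

variable (p) in
theorem norm_natCast_prime : ‖(p : E)‖ = (p : ℝ)⁻¹ := by
  rw [norm_natCast_padicAlgebra (p := p), Padic.norm_p]

variable [IsUltrametricDist E]

variable (p) in
/-- The homomorphism `(k, u) ↦ p ^ k u` on the product of `ℤ` and the units congruent to `1`
modulo `c`. -/
def zpowMulHom (c : E) : Multiplicative ℤ × congrUnits c →* Eˣ :=
  (zpowersHom Eˣ (Units.mk0 (p : E) (natCast_padic_ne_zero p))).coprod (congrUnits c).subtype

theorem coe_zpowMulHom (c : E) (x : Multiplicative ℤ × congrUnits c) :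
    (zpowMulHom p c x : E) = (p : E) ^ x.1.toAdd * (x.2 : Eˣ) := by
  simp [zpowMulHom, zpowersHom_apply]

theorem norm_zpowMulHom (c : E) (x : Multiplicative ℤ × congrUnits c) :
    ‖(zpowMulHom p c x : E)‖ = (p : ℝ)⁻¹ ^ x.1.toAdd := by
  rw [coe_zpowMulHom, norm_mul, x.2.2.1, norm_zpow, norm_natCast_prime, mul_one]

theorem fst_eq_one_of_norm_zpowMulHom_eq_one {c : E} {x : Multiplicative ℤ × congrUnits c}
    (hx : ‖(zpowMulHom p c x : E)‖ = 1) : x.1 = 1 := by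
  have hp : (1 : ℝ) < p := mod_cast (Fact.out : p.Prime).one_lt
  rw [norm_zpowMulHom] at hx
  have hzero : x.1.toAdd = 0 := zpow_right_injective₀ (by positivity) (inv_lt_one_of_one_lt₀ hp).ne
    (hx.trans (zpow_zero _).symm)
  exact Multiplicative.toAdd.injective hzero

theorem zpowMulHom_one_left (c : E) (u : congrUnits c) : zpowMulHom p c (1, u) = u := by
  ext
  simp [coe_zpowMulHom]

theorem zpowMulHom_injective (c : E) : Function.Injective (zpowMulHom p c) := by
  rw [injective_iff_map_eq_one]
  rintro ⟨k, u⟩ h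
  obtain rfl : k = 1 := fst_eq_one_of_norm_zpowMulHom_eq_one (by rw [h]; simp)
  rw [zpowMulHom_one_left] at h
  exact Prod.ext rfl (Subtype.ext h)

theorem isOpen_congrUnits {c : E} (hc : c ≠ 0) (hc1 : ‖c‖ < 1) :
    IsOpen (congrUnits c : Set Eˣ) := by
  have h : (congrUnits c : Set Eˣ) = Units.val ⁻¹' Metric.closedBall 1 ‖c‖ := by
    ext u
    rw [SetLike.mem_coe, mem_congrUnits hc1, Set.mem_preimage, mem_closedBall_iff_norm]
  rw [h]
  exact (IsUltrametricDist.isOpen_closedBall _ (norm_ne_zero_iff.mpr hc)).preimage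
    Units.continuous_val

theorem index_range_zpowMulHom_ne_zero [FiniteDimensional ℚ_[p] E] {c : E} (hc : c ≠ 0)
    (hc1 : ‖c‖ < 1) : (zpowMulHom p c).range.index ≠ 0 := by
  have := FiniteDimensional.proper ℚ_[p] E
  have hp : (1 : ℝ) < p := mod_cast (Fact.out : p.Prime).one_lt
  have hle : congrUnits c ≤ (zpowMulHom p c).range :=
    fun u hu => ⟨(1, ⟨u, hu⟩), zpowMulHom_one_left c _⟩
  refine index_ne_zero_of_isOpen_of_isCompact (Subgroup.isOpen_mono hle (isOpen_congrUnits hc hc1))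
    (isCompact_units_norm_mem_Icc (r := (p : ℝ)⁻¹) (by positivity)) fun x => ?_
  obtain ⟨k, hk₁, hk₂⟩ := exists_mem_Ioc_zpow (norm_pos_iff.mpr x.ne_zero) hp
  refine ⟨_, ⟨(Multiplicative.ofAdd (k + 1), 1), rfl⟩, ?_⟩
  have hpk : (0 : ℝ) < (p : ℝ) ^ (k + 1) := by positivity
  rw [Set.mem_ofPred_eq, Units.val_mul, norm_mul, norm_zpowMulHom, toAdd_ofAdd, inv_zpow,
    ← div_eq_mul_inv]
  refine ⟨?_, (div_le_one hpk).mpr hk₂⟩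
  rw [le_div_iff₀ hpk, zpow_add_one₀ (by positivity), mul_comm, mul_inv_cancel_right₀]
  · exact hk₁.le
  · positivity

theorem index_range_powMonoidHom_units_of_norm [FiniteDimensional ℚ_[p] E] {n : ℕ}
    (hn : n ≠ 0) :
    (powMonoidHom n : Eˣ →* Eˣ).range.index =
      n * p ^ (padicValNat p n * Module.finrank ℚ_[p] E) * Nat.card (rootsOfUnity n E) := by
  have : CompleteSpace E := FiniteDimensional.complete ℚ_[p] E
  have : CharZero E := charZero_of_injective_algebraMap (algebraMap ℚ_[p] E).injective
  have hp : (1 : ℝ) < p := mod_cast (Fact.out : p.Prime).one_lt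
  have hn' : (n : E) ≠ 0 := Nat.cast_ne_zero.mpr hn
  set c : E := n * p
  have hc : c ≠ 0 := mul_ne_zero hn' (natCast_padic_ne_zero p)
  have hcn : ‖c‖ < ‖(n : E)‖ := by
    rw [norm_mul, norm_natCast_prime p]
    exact mul_lt_of_lt_one_right (norm_pos_iff.mpr hn') (inv_lt_one_of_one_lt₀ hp)
  have hc1 : ‖c‖ < 1 := hcn.trans_le (IsUltrametricDist.norm_natCast_le_one E n)
  have hindex_units : (powMonoidHom n : congrUnits c →* congrUnits c).range.index =
      p ^ (padicValNat p n * Module.finrank ℚ_[p] E) := by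
    rw [← relIndex_map_nsmul_unitBall hn, ← relIndex_congrUnits hn' hc hcn.le hc1,
      ← map_powMonoidHom_congrUnits hn' hc1 hcn, Subgroup.relIndex]
    congr 1
    ext u
    simp [Subgroup.mem_subgroupOf, Subtype.ext_iff]
  have hdisjoint : (zpowMulHom p c).range ⊓ (powMonoidHom n : Eˣ →* Eˣ).ker = ⊥ := by
    rw [eq_bot_iff]
    rintro _ ⟨⟨⟨k, u⟩, rfl⟩, hpow⟩
    have hpow : (zpowMulHom p c (k, u)) ^ n = 1 := hpow
    have hfin : IsOfFinOrder (zpowMulHom p c (k, u) : E) :=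
      Units.isOfFinOrder_val.mpr
        (isOfFinOrder_iff_pow_eq_one.mpr ⟨n, Nat.pos_of_ne_zero hn, hpow⟩)
    obtain rfl : k = 1 := fst_eq_one_of_norm_zpowMulHom_eq_one hfin.norm_eq_one
    rw [zpowMulHom_one_left] at hpow ⊢
    have h := norm_pow_sub_pow_eq (n := n) hc1 hcn u.2.2 (v := 1) (by simp)
    rw [one_pow, ← Units.val_pow_eq_pow_val, hpow, Units.val_one, sub_self, norm_zero, zero_eq_mul,
      norm_eq_zero, or_iff_right hn', norm_eq_zero, sub_eq_zero] at h
    exact Units.ext h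
  rw [index_range_powMonoidHom_eq_of_injective _ (zpowMulHom_injective (p := p) c)
      (index_range_zpowMulHom_ne_zero hc hc1), index_range_powMonoidHom_prod,
    index_range_powMonoidHom_int, hindex_units, ← Subgroup.inf_relIndex_right, hdisjoint,
    Subgroup.relIndex_bot_left]
  rfl

end PadicNormed

theorem index_range_powMonoidHom_units {p : ℕ} [Fact p.Prime] {E : Type*} [Field E]
    [Algebra ℚ_[p] E] [FiniteDimensional ℚ_[p] E] {n : ℕ} (hn : n ≠ 0) :
    (powMonoidHom n : Eˣ →* Eˣ).range.index =
      n * p ^ (padicValNat p n * Module.finrank ℚ_[p] E) * Nat.card (rootsOfUnity n E) := by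
  let := spectralNorm.normedField ℚ_[p] E
  let := spectralNorm.normedAlgebra ℚ_[p] E
  have : IsUltrametricDist E :=
    IsUltrametricDist.isUltrametricDist_of_isNonarchimedean_norm isNonarchimedean_spectralNorm
  exact index_range_powMonoidHom_units_of_norm hn

theorem index_range_sq_units (E : Type*) [Field E] [Algebra ℚ_[2] E] [FiniteDimensional ℚ_[2] E] :
    (powMonoidHom 2 : Eˣ →* Eˣ).range.index = 2 ^ (Module.finrank ℚ_[2] E + 2) := by
  have : CharZero E := charZero_of_injective_algebraMap (algebraMap ℚ_[2] E).injective
  have hcard : Nat.card (rootsOfUnity 2 E) = 2 := by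
    exact (IsPrimitiveRoot.neg_one 0 (NeZero.ne' 2)).card_rootsOfUnity
  rw [index_range_powMonoidHom_units (p := 2) two_ne_zero, hcard, padicValNat_self, one_mul]
  ring

theorem index_range_cube_units {E : Type*} [Field E] [Algebra ℚ_[2] E]
    [FiniteDimensional ℚ_[2] E] (h : ¬ ∃ ζ : E, IsPrimitiveRoot ζ 3) :
    (powMonoidHom 3 : Eˣ →* Eˣ).range.index = 3 := by
  have hcard : Nat.card (rootsOfUnity 3 E) = 1 := by
    rw [Subgroup.card_eq_one, eq_bot_iff]
    intro ζ hζ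
    by_contra hne
    exact h ⟨ζ, (orderOf_eq_prime hζ hne ▸ IsPrimitiveRoot.orderOf ζ).map_of_injective
      (f := Units.coeHom E) Units.val_injective⟩
  rw [index_range_powMonoidHom_units (p := 2) three_ne_zero, hcard,
    padicValNat.eq_zero_of_not_dvd (by norm_num), zero_mul, pow_zero, mul_one, mul_one]

/-! ### Families permuted by full symmetric and signed symmetric groups -/

section SymmetricSystem

variable {F Ω ι : Type*} [Field F] [Field Ω] [Algebra F Ω]

theorem mem_fixingSubgroup_adjoin_iff {S : Set Ω} {g : Ω ≃ₐ[F] Ω} :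
    g ∈ (adjoin F S).fixingSubgroup ↔ ∀ x ∈ S, g x = x := by
  rw [IntermediateField.mem_fixingSubgroup_iff]
  exact forall_mem_adjoin_smul_eq_self_iff F g

theorem mem_adjoin_iff_forall_algEquiv [IsGalois F Ω] {S : Set Ω} {y : Ω} :
    y ∈ adjoin F S ↔ ∀ g : Ω ≃ₐ[F] Ω, (∀ x ∈ S, g x = x) → g y = y := by
  conv_lhs => rw [← InfiniteGalois.fixedField_fixingSubgroup (adjoin F S), mem_fixedField_iff]
  simp only [mem_fixingSubgroup_adjoin_iff]

theorem eq_of_forall_mem_fixingSubgroup_iff [IsGalois F Ω] {K L : IntermediateField F Ω}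
    (h : ∀ g, g ∈ K.fixingSubgroup ↔ g ∈ L.fixingSubgroup) : K = L := by
  rw [← InfiniteGalois.fixedField_fixingSubgroup K, Subgroup.ext h,
    InfiniteGalois.fixedField_fixingSubgroup]

/-- A symmetric system over `F` is a family of distinct elements on which the automorphisms over `F`
act through the full symmetric group: the roots of a separable polynomial with Galois group the
full symmetric group. -/
structure IsSymmetricSystem (F : Type*) [Field F] [Algebra F Ω] (x : ι → Ω) : Prop where
  injective : Function.Injective x
  exists_perm (g : Ω ≃ₐ[F] Ω) : ∃ σ : Equiv.Perm ι, ∀ i, g (x i) = x (σ i)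
  exists_algEquiv (σ : Equiv.Perm ι) : ∃ g : Ω ≃ₐ[F] Ω, ∀ i, g (x i) = x (σ i)

namespace IsSymmetricSystem

variable {x : ι → Ω} (hx : IsSymmetricSystem F x)
include hx

/-- The action of the automorphisms of `Ω` over `F` on the indices of a symmetric system. -/
noncomputable def permHom : (Ω ≃ₐ[F] Ω) →* Equiv.Perm ι :=
  MonoidHom.mk' (fun g => (hx.exists_perm g).choose) fun g h =>
    Equiv.ext fun i => hx.injective <| by
      rw [← (hx.exists_perm (g * h)).choose_spec, AlgEquiv.mul_apply,
        (hx.exists_perm h).choose_spec, (hx.exists_perm g).choose_spec, Equiv.Perm.mul_apply]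

theorem apply_eq (g : Ω ≃ₐ[F] Ω) (i : ι) : g (x i) = x (hx.permHom g i) :=
  (hx.exists_perm g).choose_spec i

theorem permHom_eq {g : Ω ≃ₐ[F] Ω} {σ : Equiv.Perm ι} (h : ∀ i, g (x i) = x (σ i)) :
    hx.permHom g = σ :=
  Equiv.ext fun i => hx.injective <| by rw [← hx.apply_eq, h]

theorem permHom_surjective : Function.Surjective hx.permHom := fun σ =>
  (hx.exists_algEquiv σ).imp fun _ => hx.permHom_eq

theorem permHom_eq_one_iff {g : Ω ≃ₐ[F] Ω} :
    hx.permHom g = 1 ↔ ∀ i, g (x i) = x i :=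
  ⟨fun h i => by rw [hx.apply_eq, h, Equiv.Perm.one_apply], fun h => hx.permHom_eq (σ := 1) h⟩

theorem apply_eq_apply_of_permHom_eq {y : Ω}
    (hy : ∀ g, hx.permHom g = 1 → g y = y) {g h : Ω ≃ₐ[F] Ω} (hgh : hx.permHom g = hx.permHom h) :
    g y = h y := by
  have := hy (h⁻¹ * g) (by rw [map_mul, map_inv, hgh, inv_mul_cancel])
  rwa [AlgEquiv.mul_apply, AlgEquiv.aut_inv, AlgEquiv.symm_apply_eq] at this

theorem normal_adjoin [IsGalois F Ω] : Normal F (adjoin F (Set.range x)) := by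
  have : Normal F Ω := inferInstance
  rw [normal_iff_forall_map_le']
  rintro g
  rw [adjoin_map, adjoin_le_iff]
  rintro _ ⟨_, ⟨i, rfl⟩, rfl⟩
  exact subset_adjoin F _ ⟨hx.permHom g i, (hx.apply_eq g i).symm⟩

theorem ker_permHom : hx.permHom.ker = (adjoin F (Set.range x)).fixingSubgroup := by
  ext g
  rw [MonoidHom.mem_ker, hx.permHom_eq_one_iff, mem_fixingSubgroup_adjoin_iff, Set.forall_mem_range]

theorem nonempty_mulEquiv_perm [IsGalois F Ω] :
    Nonempty ((adjoin F (Set.range x) ≃ₐ[F] adjoin F (Set.range x)) ≃* Equiv.Perm ι) := by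
  have := hx.normal_adjoin
  have hsurj := AlgEquiv.restrictNormalHom_surjective (F := F) (K₁ := adjoin F (Set.range x)) Ω
  exact ⟨(QuotientGroup.quotientKerEquivOfSurjective _ hsurj).symm.trans <|
    (QuotientGroup.quotientMulEquivOfEq
      ((restrictNormalHom_ker _).trans hx.ker_permHom.symm)).trans <|
    QuotientGroup.quotientKerEquivOfSurjective _ hx.permHom_surjective⟩

end IsSymmetricSystem

theorem IsSymmetricSystem.coe [IsGalois F Ω] {K : IntermediateField F Ω} [Normal F K] {x : ι → K}
    (hx : IsSymmetricSystem F x) : IsSymmetricSystem F fun i => (x i : Ω) where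
  injective := Subtype.val_injective.comp hx.injective
  exists_perm g := (hx.exists_perm (g.restrictNormal K)).imp fun σ hσ i => by
    rw [← hσ]; exact (AlgEquiv.restrictNormal_commutes g K (x i)).symm
  exists_algEquiv σ := by
    obtain ⟨h, hh⟩ := hx.exists_algEquiv σ
    obtain ⟨g, rfl⟩ := AlgEquiv.restrictNormalHom_surjective (K₁ := K) Ω h
    exact ⟨g, fun i => by rw [← hh]; exact (AlgEquiv.restrictNormal_commutes g K (x i)).symm⟩

theorem exists_isSymmetricSystem_adjoin_eq_top [Nonempty ι] {K : Type*} [Field K]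
    [Algebra F K] [FiniteDimensional F K] [IsGalois F K] (e : (K ≃ₐ[F] K) ≃* Equiv.Perm ι) :
    ∃ x : ι → K, IsSymmetricSystem F x ∧ adjoin F (Set.range x) = ⊤ := by
  classical
  obtain ⟨i₀⟩ := ‹Nonempty ι›
  let Q : Subgroup (K ≃ₐ[F] K) := (MulAction.stabilizer (Equiv.Perm ι) i₀).comap e.toMonoidHom
  obtain ⟨θ, hθ⟩ := Field.exists_primitive_element F (fixedField Q)
  replace hθ : F⟮(θ : K)⟯ = fixedField Q := by simpa using congr_arg lift hθ
  have fix_iff (g : K ≃ₐ[F] K) : g θ = θ ↔ e g i₀ = i₀ := by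
    calc g θ = θ ↔ g ∈ F⟮(θ : K)⟯.fixingSubgroup := by
          rw [mem_fixingSubgroup_adjoin_iff]; simp only [Set.mem_singleton_iff, forall_eq]
      _ ↔ e g i₀ = i₀ := by rw [hθ, fixingSubgroup_fixedField]; rfl
  have apply_eq_iff (g h : K ≃ₐ[F] K) : g θ = h θ ↔ e g i₀ = e h i₀ := by
    simpa [Equiv.symm_apply_eq, AlgEquiv.symm_apply_eq] using fix_iff (h⁻¹ * g)
  let x (i : ι) : K := e.symm (Equiv.swap i₀ i) θ
  have hx (σ : Equiv.Perm ι) (i : ι) : e.symm σ (x i) = x (σ i) := by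
    rw [← AlgEquiv.mul_apply, apply_eq_iff]
    simp
  have hinj : Function.Injective x := fun i j hij => by simpa [x, apply_eq_iff] using hij
  have hx' : IsSymmetricSystem F x :=
    ⟨hinj, fun g => ⟨e g, fun i => by rw [← hx, e.symm_apply_apply]⟩, fun σ => ⟨e.symm σ, hx σ⟩⟩
  refine ⟨x, hx', ?_⟩
  rw [eq_top_iff]
  rintro y -
  rw [mem_adjoin_iff_forall_algEquiv]
  intro g hg
  have : e g = 1 := Equiv.ext fun i => hinj <| by
    rw [← hx, e.symm_apply_apply, hg _ ⟨i, rfl⟩, Equiv.Perm.one_apply]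
  rw [(map_eq_one_iff e e.injective).1 this, AlgEquiv.one_apply]

theorem isGalois_mulEquiv_perm_iff [IsGalois F Ω] [Finite ι] [Nonempty ι]
    {K : IntermediateField F Ω} :
    (FiniteDimensional F K ∧ IsGalois F K ∧ Nonempty ((K ≃ₐ[F] K) ≃* Equiv.Perm ι)) ↔
      ∃ x : ι → Ω, IsSymmetricSystem F x ∧ adjoin F (Set.range x) = K := by
  constructor
  · rintro ⟨_, _, ⟨e⟩⟩
    obtain ⟨x, hx, hK⟩ := exists_isSymmetricSystem_adjoin_eq_top e
    refine ⟨_, hx.coe, ?_⟩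
    have := congr_arg lift hK
    rwa [lift_adjoin, lift_top, ← Set.range_comp] at this
  · rintro ⟨x, hx, rfl⟩
    have := hx.normal_adjoin
    refine ⟨finiteDimensional_adjoin fun y _ => Algebra.IsIntegral.isIntegral y, ⟨⟩,
      hx.nonempty_mulEquiv_perm⟩

end SymmetricSystem

section SignedSystem

/-- The triples of signs with product `1`, a Klein four-group which indexes the roots of a quartic
resolved by square roots of the roots of its cubic resolvent. -/
abbrev SignVec : Type := {ε : Fin 3 → ℤˣ // ∏ i, ε i = 1}

instance : Nonempty SignVec := ⟨⟨1, by simp⟩⟩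

theorem sum_signVec_mul (i j : Fin 3) :
    ∑ ε : SignVec, (ε.1 i * ε.1 j : ℤ) = if i = j then 4 else 0 := by
  revert i j; decide

theorem sum_mul_signVec (ε ε' : SignVec) :
    ∑ i, (ε.1 i * ε'.1 i : ℤ) = if ε = ε' then 3 else -1 := by
  revert ε ε'; decide

theorem exists_signVec_apply_ne {i j : Fin 3} (h : i ≠ j) :
    ∃ ε : SignVec, ε.1 i = -1 ∧ ε.1 j = 1 := by
  revert i j; decide

/-- The affine action of a triple of signs `δ` and a permutation `σ` of the coordinates on
`SignVec`: the vector `ε` is sent to the vector with entry `δ i * ε i` at `σ i`. -/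
def signedPerm (δ : SignVec) (σ : Equiv.Perm (Fin 3)) : Equiv.Perm SignVec where
  toFun ε := ⟨fun i => δ.1 (σ.symm i) * ε.1 (σ.symm i), by
    rw [Equiv.prod_comp σ.symm fun i => δ.1 i * ε.1 i, Finset.prod_mul_distrib, δ.2, ε.2, one_mul]⟩
  invFun ε := ⟨fun i => δ.1 i * ε.1 (σ i), by
    rw [Finset.prod_mul_distrib, Equiv.prod_comp σ ε.1, δ.2, ε.2, one_mul]⟩
  left_inv ε := by ext i; simp [← mul_assoc, Int.units_mul_self]
  right_inv ε := by ext i; simp [← mul_assoc, Int.units_mul_self]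

theorem signedPerm_apply_apply (δ ε : SignVec) (σ : Equiv.Perm (Fin 3)) (i : Fin 3) :
    (signedPerm δ σ ε).1 (σ i) = δ.1 i * ε.1 i := by
  simp [signedPerm]

theorem signedPerm_injective :
    Function.Injective fun p : SignVec × Equiv.Perm (Fin 3) => signedPerm p.1 p.2 := by
  rintro ⟨δ, σ⟩ ⟨δ', σ'⟩ h
  have h' (ε : SignVec) (i : Fin 3) :
      δ.1 (σ.symm i) * ε.1 (σ.symm i) = δ'.1 (σ'.symm i) * ε.1 (σ'.symm i) :=
    congr_fun (congr_arg Subtype.val (Equiv.congr_fun h ε)) i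
  have h1 (i : Fin 3) : δ.1 (σ.symm i) = δ'.1 (σ'.symm i) := by
    simpa using h' ⟨1, by simp⟩ i
  have hσ : σ.symm = σ'.symm := Equiv.ext fun i => by
    by_contra hne
    obtain ⟨ε, hε, hε'⟩ := exists_signVec_apply_ne hne
    have := h' ε i
    rw [h1, hε, hε', mul_right_inj] at this
    exact absurd this (by decide)
  obtain rfl : σ = σ' := by simpa using congr_arg Equiv.symm hσ
  exact Prod.ext (Subtype.ext <| funext fun i => by simpa using h1 (σ i)) rfl

theorem card_signVec : Fintype.card SignVec = 4 := by decide

theorem exists_signedPerm_eq (π : Equiv.Perm SignVec) : ∃ δ σ, signedPerm δ σ = π := by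
  have hcard : Fintype.card (SignVec × Equiv.Perm (Fin 3)) = Fintype.card (Equiv.Perm SignVec) := by
    simp [Fintype.card_perm, card_signVec, Nat.factorial]
  obtain ⟨⟨δ, σ⟩, h⟩ :=
    ((Fintype.bijective_iff_injective_and_card _).2 ⟨signedPerm_injective, hcard⟩).2 π
  exact ⟨δ, σ, h⟩

variable {F Ω : Type*} [Field F] [Field Ω] [Algebra F Ω]

/-- A signed system over `F` is a triple of nonzero elements on which the automorphisms over `F`
act through all signed permutations whose signs have product `1`. -/
structure IsSignedSystem (F : Type*) [Field F] [Algebra F Ω] (z : Fin 3 → Ω) : Prop where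
  ne_zero (i : Fin 3) : z i ≠ 0
  exists_signs (g : Ω ≃ₐ[F] Ω) :
    ∃ (δ : SignVec) (σ : Equiv.Perm (Fin 3)), ∀ i, g (z i) = (δ.1 i : ℤ) * z (σ i)
  exists_algEquiv (δ : SignVec) (σ : Equiv.Perm (Fin 3)) :
    ∃ g : Ω ≃ₐ[F] Ω, ∀ i, g (z i) = (δ.1 i : ℤ) * z (σ i)

theorem algEquiv_sum_signs_mul {g : Ω ≃ₐ[F] Ω} {z : Fin 3 → Ω} {δ : SignVec}
    {σ : Equiv.Perm (Fin 3)} (h : ∀ i, g (z i) = (δ.1 i : ℤ) * z (σ i)) (ε : SignVec) :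
    g (∑ i, (ε.1 i : ℤ) * z i) = ∑ i, ((signedPerm δ σ ε).1 i : ℤ) * z i := by
  rw [map_sum, ← Equiv.sum_comp σ fun i => ((signedPerm δ σ ε).1 i : ℤ) * z i]
  refine Finset.sum_congr rfl fun i _ => ?_
  rw [map_mul, map_intCast, h, signedPerm_apply_apply]
  push_cast
  ring

theorem algEquiv_sum_signVec_mul {g : Ω ≃ₐ[F] Ω} {θ : SignVec → Ω} {δ : SignVec}
    {σ : Equiv.Perm (Fin 3)} (h : ∀ ε, g (θ ε) = θ (signedPerm δ σ ε)) (i : Fin 3) :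
    g (∑ ε : SignVec, (ε.1 i : ℤ) * θ ε) = (δ.1 i : ℤ) * ∑ ε : SignVec, (ε.1 (σ i) : ℤ) * θ ε := by
  rw [map_sum, Finset.mul_sum,
    ← Equiv.sum_comp (signedPerm δ σ) fun ε => ((δ.1 i : ℤ) : Ω) * ((ε.1 (σ i) : ℤ) * θ ε)]
  refine Finset.sum_congr rfl fun ε _ => ?_
  have hδ : (((δ.1 i : ℤ) : Ω)) * (δ.1 i : ℤ) = 1 := by
    rw [← Int.cast_mul, ← Units.val_mul, Int.units_mul_self]; simp
  rw [map_mul, map_intCast, h, signedPerm_apply_apply]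
  push_cast
  linear_combination (-(ε.1 i : ℤ) * θ (signedPerm δ σ ε)) * hδ

theorem sum_signVec_mul_sum_signs_mul (z : Fin 3 → Ω) (i : Fin 3) :
    ∑ ε : SignVec, (ε.1 i : ℤ) * ∑ j, (ε.1 j : ℤ) * z j = 4 * z i := by
  have h (j : Fin 3) : ∑ ε : SignVec, ((ε.1 i : ℤ) : Ω) * (ε.1 j : ℤ) = if i = j then 4 else 0 := by
    exact_mod_cast congr_arg (Int.cast : ℤ → Ω) (sum_signVec_mul i j)
  simp_rw [Finset.mul_sum]
  rw [Finset.sum_comm]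
  simp_rw [← mul_assoc, ← Finset.sum_mul, h]
  simp

theorem sum_signs_mul_sum_signVec_mul (θ : SignVec → Ω) (ε : SignVec) :
    ∑ i, (ε.1 i : ℤ) * ∑ ε' : SignVec, (ε'.1 i : ℤ) * θ ε' = 4 * θ ε - ∑ ε', θ ε' := by
  have h (ε' : SignVec) :
      ∑ i, ((ε.1 i : ℤ) : Ω) * (ε'.1 i : ℤ) = (if ε = ε' then 4 else 0) - 1 := by
    have := congr_arg (Int.cast : ℤ → Ω) (sum_mul_signVec ε ε')
    push_cast at this
    rw [this]
    split_ifs <;> norm_num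
  simp_rw [Finset.mul_sum]
  rw [Finset.sum_comm]
  simp_rw [← mul_assoc, ← Finset.sum_mul, h]
  simp [sub_mul]

theorem injective_of_forall_exists_algEquiv {ι : Type*} {x : ι → Ω}
    (h : ∀ σ : Equiv.Perm ι, ∃ g : Ω ≃ₐ[F] Ω, ∀ i, g (x i) = x (σ i)) {i j : ι} (hij : x i ≠ x j) :
    Function.Injective x := by
  intro k l hkl
  by_contra hne
  obtain ⟨σ, hk, hl⟩ := MulAction.is_two_pretransitive_iff.1
    (Equiv.Perm.isMultiplyPretransitive ι 2) hne (ne_of_apply_ne x hij)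
  obtain ⟨g, hg⟩ := h σ
  apply hij
  rw [← hk, ← hl, Equiv.Perm.smul_def, Equiv.Perm.smul_def, ← hg, ← hg, hkl]

variable [NeZero (2 : Ω)]

theorem four_ne_zero_of_two : (4 : Ω) ≠ 0 := by
  rw [show (4 : Ω) = 2 * 2 by norm_num]
  exact mul_ne_zero two_ne_zero two_ne_zero

theorem IsSignedSystem.isSymmetricSystem {z : Fin 3 → Ω} (hz : IsSignedSystem F z) :
    IsSymmetricSystem F fun ε : SignVec => ∑ i, (ε.1 i : ℤ) * z i := by
  have realise (π : Equiv.Perm SignVec) : ∃ g : Ω ≃ₐ[F] Ω, ∀ ε : SignVec,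
      g (∑ i, (ε.1 i : ℤ) * z i) = ∑ i, ((π ε).1 i : ℤ) * z i := by
    obtain ⟨δ, σ, rfl⟩ := exists_signedPerm_eq π
    exact (hz.exists_algEquiv δ σ).imp fun g => algEquiv_sum_signs_mul
  refine ⟨?_, fun g => ?_, realise⟩
  · by_contra hinj
    have hconst (ε : SignVec) : ∑ i, (ε.1 i : ℤ) * z i = ∑ i, z i := by
      by_contra hne
      exact hinj <|
        injective_of_forall_exists_algEquiv realise (j := ⟨1, by simp⟩) (by simpa using hne)
    have h0 := sum_signVec_mul_sum_signs_mul z 0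
    have h1 : ∑ ε : SignVec, ((ε.1 0 : ℤ) : Ω) = 0 := by
      exact_mod_cast congr_arg (Int.cast : ℤ → Ω) (by decide : ∑ ε : SignVec, (ε.1 0 : ℤ) = 0)
    simp_rw [hconst, ← Finset.sum_mul, h1, zero_mul] at h0
    exact mul_ne_zero four_ne_zero_of_two (hz.ne_zero 0) h0.symm
  · obtain ⟨δ, σ, h⟩ := hz.exists_signs g
    exact ⟨signedPerm δ σ, algEquiv_sum_signs_mul h⟩

theorem IsSymmetricSystem.isSignedSystem {θ : SignVec → Ω} (hθ : IsSymmetricSystem F θ) :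
    IsSignedSystem F fun i => ∑ ε : SignVec, (ε.1 i : ℤ) * θ ε := by
  have realise (δ : SignVec) (σ : Equiv.Perm (Fin 3)) : ∃ g : Ω ≃ₐ[F] Ω, ∀ i,
      g (∑ ε : SignVec, (ε.1 i : ℤ) * θ ε) = (δ.1 i : ℤ) * ∑ ε : SignVec, (ε.1 (σ i) : ℤ) * θ ε :=
    (hθ.exists_algEquiv (signedPerm δ σ)).imp fun g => algEquiv_sum_signVec_mul
  refine ⟨fun i hi => ?_, fun g => ?_, realise⟩
  · have hzero (j : Fin 3) : ∑ ε : SignVec, (ε.1 j : ℤ) * θ ε = 0 := by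
      obtain ⟨g, hg⟩ := realise ⟨1, by simp⟩ (Equiv.swap i j)
      simpa [hi] using (hg i).symm
    have hconst (ε : SignVec) : 4 * θ ε = ∑ ε', θ ε' := by
      exact sub_eq_zero.1 (by simpa [hzero] using (sum_signs_mul_sum_signVec_mul θ ε).symm)
    obtain ⟨ε, ε', hne⟩ : ∃ ε ε' : SignVec, ε ≠ ε' := by decide
    exact hne <| hθ.injective <|
      mul_left_cancel₀ four_ne_zero_of_two ((hconst ε).trans (hconst ε').symm)
  · obtain ⟨π, hπ⟩ := hθ.exists_perm g
    obtain ⟨δ, σ, rfl⟩ := exists_signedPerm_eq π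
    exact ⟨δ, σ, algEquiv_sum_signVec_mul hπ⟩

theorem adjoin_range_sum_signs_mul [IsGalois F Ω] (z : Fin 3 → Ω) :
    adjoin F (Set.range fun ε : SignVec => ∑ i, (ε.1 i : ℤ) * z i) = adjoin F (Set.range z) := by
  refine eq_of_forall_mem_fixingSubgroup_iff fun g => ?_
  simp only [mem_fixingSubgroup_adjoin_iff, Set.forall_mem_range]
  refine ⟨fun h i => mul_left_cancel₀ four_ne_zero_of_two ?_, fun h ε => by simp [h]⟩
  have := congr_arg g (sum_signVec_mul_sum_signs_mul z i)
  rw [map_sum] at this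
  simp only [map_mul, map_intCast, h, map_ofNat] at this
  rw [← this, sum_signVec_mul_sum_signs_mul]

theorem IsSymmetricSystem.adjoin_range_sum_signVec_mul [IsGalois F Ω] {θ : SignVec → Ω}
    (hθ : IsSymmetricSystem F θ) :
    adjoin F (Set.range fun i => ∑ ε : SignVec, (ε.1 i : ℤ) * θ ε) = adjoin F (Set.range θ) := by
  refine eq_of_forall_mem_fixingSubgroup_iff fun g => ?_
  simp only [mem_fixingSubgroup_adjoin_iff, Set.forall_mem_range]
  refine ⟨fun h ε => mul_left_cancel₀ four_ne_zero_of_two ?_, fun h i => by simp [h]⟩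
  have hsum : g (∑ ε, θ ε) = ∑ ε, θ ε := by
    obtain ⟨π, hπ⟩ := hθ.exists_perm g
    simp_rw [map_sum, hπ, Equiv.sum_comp π θ]
  have := congr_arg g (sum_signs_mul_sum_signVec_mul θ ε)
  rw [map_sum] at this
  simp only [map_mul, map_intCast, h, map_sub, hsum, map_ofNat] at this
  rwa [sum_signs_mul_sum_signVec_mul, sub_left_inj, eq_comm] at this

theorem isGalois_mulEquiv_perm_fin_four_iff [IsGalois F Ω] {K : IntermediateField F Ω} :
    (FiniteDimensional F K ∧ IsGalois F K ∧ Nonempty ((K ≃ₐ[F] K) ≃* Equiv.Perm (Fin 4))) ↔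
      ∃ z : Fin 3 → Ω, IsSignedSystem F z ∧ adjoin F (Set.range z) = K := by
  have e : Equiv.Perm (Fin 4) ≃* Equiv.Perm SignVec :=
    (Fintype.equivFinOfCardEq card_signVec).symm.permCongrHom
  have he : Nonempty ((K ≃ₐ[F] K) ≃* Equiv.Perm (Fin 4)) ↔
      Nonempty ((K ≃ₐ[F] K) ≃* Equiv.Perm SignVec) :=
    ⟨fun ⟨f⟩ => ⟨f.trans e⟩, fun ⟨f⟩ => ⟨f.trans e.symm⟩⟩
  rw [he, isGalois_mulEquiv_perm_iff]
  constructor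
  · rintro ⟨θ, hθ, rfl⟩
    exact ⟨_, hθ.isSignedSystem, hθ.adjoin_range_sum_signVec_mul⟩
  · rintro ⟨z, hz, rfl⟩
    exact ⟨_, hz.isSymmetricSystem, adjoin_range_sum_signs_mul z⟩

end SignedSystem

/-! ### Square roots over a cubic field -/

namespace IsSymmetricSystem
section Embedding

variable {F Ω ι : Type*} [Field F] [Field Ω] [Algebra F Ω] {x : ι → Ω} (hx : IsSymmetricSystem F x)

open Classical in
/-- The embedding of `F⟮x i⟯` over `F` which sends `x i` to `x j`, for a symmetric system `x`. -/
noncomputable def embedding (i j : ι) : F⟮x i⟯ →ₐ[F] Ω :=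
  ((hx.exists_algEquiv (Equiv.swap i j)).choose : Ω →ₐ[F] Ω).comp F⟮x i⟯.val

open Classical in
theorem embedding_gen (i j : ι) : hx.embedding i j (AdjoinSimple.gen F (x i)) = x j := by
  simpa [embedding] using (hx.exists_algEquiv (Equiv.swap i j)).choose_spec i

theorem eq_embedding_of_apply_gen {i j : ι} {φ : F⟮x i⟯ →ₐ[F] Ω}
    (h : φ (AdjoinSimple.gen F (x i)) = x j) : φ = hx.embedding i j := by
  refine adjoin_algHom_ext F ?_
  rintro _ rfl
  exact h.trans (hx.embedding_gen i j).symm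

theorem algEquiv_embedding (g : Ω ≃ₐ[F] Ω) (i j : ι) (α : F⟮x i⟯) :
    g (hx.embedding i j α) = hx.embedding i (hx.permHom g j) α := by
  have h : (g : Ω →ₐ[F] Ω).comp (hx.embedding i j) = hx.embedding i (hx.permHom g j) :=
    hx.eq_embedding_of_apply_gen (by simp [embedding_gen, hx.apply_eq])
  exact DFunLike.congr_fun h α

theorem embedding_self (i : ι) (α : F⟮x i⟯) : hx.embedding i i α = α := by
  have h : F⟮x i⟯.val = hx.embedding i i := hx.eq_embedding_of_apply_gen (by simp)
  rw [← h, coe_val]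

theorem algEquiv_coe (g : Ω ≃ₐ[F] Ω) {i : ι} (α : F⟮x i⟯) :
    g α = hx.embedding i (hx.permHom g i) α := by
  rw [← hx.algEquiv_embedding, hx.embedding_self]

include hx
variable [IsGalois F Ω]

theorem embedding_bijective (i : ι) : Function.Bijective (hx.embedding i) := by
  refine ⟨fun j k h => hx.injective ?_, fun φ => ?_⟩
  · rw [← hx.embedding_gen i j, h, hx.embedding_gen]
  · have hconj : IsConjRoot F (φ (AdjoinSimple.gen F (x i))) (x i) := by
      rw [isConjRoot_def, minpoly.algHom_eq φ φ.injective, minpoly_gen]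
    obtain ⟨g, hg⟩ := isConjRoot_iff_exists_algEquiv.1 hconj
    exact ⟨hx.permHom g i, (hx.eq_embedding_of_apply_gen (by rw [← hg, hx.apply_eq])).symm⟩

variable [Fintype ι]

theorem finrank_adjoin_simple [IsAlgClosed Ω] (i : ι) :
    Module.finrank F F⟮x i⟯ = Fintype.card ι := by
  have := adjoin.finiteDimensional (Algebra.IsIntegral.isIntegral (R := F) (x i))
  rw [← AlgHom.card F F⟮x i⟯ Ω, ← Fintype.card_of_bijective (hx.embedding_bijective i)]

theorem algebraMap_norm [IsAlgClosed Ω] (i : ι) (α : F⟮x i⟯) :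
    algebraMap F Ω (Algebra.norm F α) = ∏ j, hx.embedding i j α := by
  have := adjoin.finiteDimensional (Algebra.IsIntegral.isIntegral (R := F) (x i))
  rw [Algebra.norm_eq_prod_embeddings F Ω α,
    ← Function.Bijective.prod_comp (hx.embedding_bijective i) fun φ => φ α]

theorem algebraMap_norm_of_eq [IsAlgClosed Ω] {E : IntermediateField F Ω} {i : ι} (hE : F⟮x i⟯ = E)
    {α : E} (hα : (α : Ω) = x i) : algebraMap F Ω (Algebra.norm F α) = ∏ j, x j := by
  subst hE
  obtain rfl : α = AdjoinSimple.gen F (x i) := Subtype.ext hα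
  simp_rw [hx.algebraMap_norm, hx.embedding_gen]

end Embedding

section Cubic

variable {F Ω : Type*} [Field F] [Field Ω] [Algebra F Ω] [IsGalois F Ω]
  {r : Fin 3 → Ω} (hr : IsSymmetricSystem F r)
include hr

variable [IsAlgClosed Ω] [NeZero (2 : Ω)]

-- An automorphism moving `y` but fixing `r 0` changes the sign of `y * s y * s (s y)`, where `s`
-- permutes the roots cyclically; this product is a square root of the norm of `α`.
theorem isSquare_of_isSquare_norm {α : F⟮r 0⟯} (hα : IsSquare (Algebra.norm F α)) {y : Ω}
    (hyα : y ^ 2 = α) (hy : ∀ g, hr.permHom g = 1 → g y = y) : IsSquare α := by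
  suffices hmem : y ∈ F⟮r 0⟯ from ⟨⟨y, hmem⟩, Subtype.ext (by simp [← hyα, sq])⟩
  rw [mem_adjoin_iff_forall_algEquiv]
  simp only [Set.mem_singleton_iff, forall_eq]
  intro t ht
  by_contra hty
  have ht0 : hr.permHom t 0 = 0 := hr.injective (by rw [← hr.apply_eq, ht])
  have ht_swap : hr.permHom t = Equiv.swap 1 2 := by
    have : ∀ σ : Equiv.Perm (Fin 3), σ 0 = 0 → σ = 1 ∨ σ = Equiv.swap 1 2 := by decide
    exact (this _ ht0).resolve_left fun h => hty (hy t h)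
  have hty_neg : t y = -y := by
    refine (sq_eq_sq_iff_eq_or_eq_neg.1 ?_).resolve_left hty
    rw [← map_pow, hyα, hr.algEquiv_coe, ht0, hr.embedding_self]
  obtain ⟨s, hs⟩ := hr.permHom_surjective (finRotate 3)
  have hts : t (s y) = - s (s y) := by
    rw [← map_neg, ← map_neg, ← hty_neg]
    refine hr.apply_eq_apply_of_permHom_eq hy (g := t * s) (h := s * (s * t)) ?_
    simp only [map_mul, hs, ht_swap]
    decide
  have htss : t (s (s y)) = - s y := by
    rw [← map_neg, ← hty_neg]
    refine hr.apply_eq_apply_of_permHom_eq hy (g := t * (s * s)) (h := s * t) ?_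
    simp only [map_mul, hs, ht_swap]
    decide
  have hnorm : (y * s y * s (s y)) ^ 2 = algebraMap F Ω (Algebra.norm F α) := by
    rw [mul_pow, mul_pow, ← map_pow, ← map_pow, ← map_pow, hyα, hr.algebraMap_norm,
      Fin.prod_univ_three, hr.algEquiv_coe s, hr.algEquiv_embedding, hs, hr.embedding_self]
    rfl
  obtain ⟨c, hc⟩ := hα
  have hmem : t (y * s y * s (s y)) = y * s y * s (s y) := by
    rw [hc, map_mul, ← sq, sq_eq_sq_iff_eq_or_eq_neg] at hnorm
    rcases hnorm with h | h <;> simp only [h, map_neg, AlgEquiv.commutes]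
  have hzero : 2 * (y * s y * s (s y)) = 0 := by
    simp only [map_mul, hty_neg, hts, htss] at hmem
    linear_combination -hmem
  have hy0 : y = 0 := by simpa [two_ne_zero] using hzero
  simp [hy0] at hty

end Cubic
end IsSymmetricSystem

section Resolvent

variable {F Ω : Type*} [Field F] [Field Ω] [Algebra F Ω]

theorem exists_perm_fix_and_ne {δ η : SignVec} (hδ : δ.1 ≠ 1) (hη : η.1 ≠ 1) (h : δ ≠ η) :
    ∃ σ : Equiv.Perm (Fin 3), (∀ i, δ.1 (σ i) = δ.1 i) ∧ ∃ i, η.1 (σ i) ≠ η.1 i := by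
  revert δ η; decide

theorem exists_perm_comp_eq {δ η : SignVec} (hδ : δ.1 ≠ 1) (hη : η.1 ≠ 1) :
    ∃ σ : Equiv.Perm (Fin 3), ∀ i, δ.1 (σ i) = η.1 i := by
  revert δ η; decide

theorem intCast_units_mul_self (u : ℤˣ) : ((u : ℤ) : Ω) * (u : ℤ) = 1 := by
  rcases Int.units_eq_one_or u with rfl | rfl <;> simp

theorem exists_units_mul_eq_of_sq_eq_sq {y w : Ω} (h : y ^ 2 = w ^ 2) :
    ∃ u : ℤˣ, y = (u : ℤ) * w := by
  rcases sq_eq_sq_iff_eq_or_eq_neg.1 h with rfl | rfl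
  · exact ⟨1, by simp⟩
  · exact ⟨-1, by simp⟩

theorem inv_mul_mul_apply_of_signs {z : Fin 3 → Ω} {g h : Ω ≃ₐ[F] Ω} {δ η : Fin 3 → ℤˣ}
    {σ : Equiv.Perm (Fin 3)} (hg : ∀ i, g (z i) = (δ i : ℤ) * z i)
    (hh : ∀ i, h (z i) = (η i : ℤ) * z (σ i)) (i : Fin 3) :
    (h⁻¹ * g * h) (z i) = (δ (σ i) : ℤ) * z i := by
  rw [AlgEquiv.mul_apply, AlgEquiv.mul_apply, AlgEquiv.aut_inv, AlgEquiv.symm_apply_eq, hh, map_mul,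
    map_mul, map_intCast, map_intCast, hg, hh]
  ring

theorem intCast_units_mul_eq_self_iff [NeZero (2 : Ω)] {u : ℤˣ} {y : Ω} (hy : y ≠ 0) :
    (u : ℤ) * y = y ↔ u = 1 := by
  rcases Int.units_eq_one_or u with rfl | rfl
  · simp
  · simpa [neg_eq_iff_add_eq_zero, ← two_mul, two_ne_zero] using hy

theorem IsSignedSystem.isSymmetricSystem_sq [NeZero (2 : Ω)] {z : Fin 3 → Ω}
    (hz : IsSignedSystem F z) : IsSymmetricSystem F fun i => z i ^ 2 where
  injective i j hij := by
    by_contra hne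
    obtain ⟨ε, hi, hj⟩ := exists_signVec_apply_ne hne
    obtain ⟨g, hg⟩ := hz.exists_algEquiv ε 1
    obtain ⟨u, hu⟩ := exists_units_mul_eq_of_sq_eq_sq hij
    have := congr_arg g hu
    rw [map_mul, map_intCast, hg, hg, hi, hj, Equiv.Perm.one_apply, Equiv.Perm.one_apply,
      Units.val_one, Int.cast_one, one_mul, ← hu,
      intCast_units_mul_eq_self_iff (hz.ne_zero i)] at this
    exact absurd this (by decide)
  exists_perm g := by
    obtain ⟨δ, σ, h⟩ := hz.exists_signs g
    exact ⟨σ, fun i => by rw [map_pow, h, mul_pow, sq, intCast_units_mul_self, one_mul]⟩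
  exists_algEquiv σ := by
    obtain ⟨g, h⟩ := hz.exists_algEquiv ⟨1, by simp⟩ σ
    exact ⟨g, fun i => by simp [h]⟩

namespace IsSymmetricSystem
variable {r : Fin 3 → Ω} (hr : IsSymmetricSystem F r)

/-- The field obtained from `F` by adjoining the `r i` and the square roots of the conjugates of
`α`, that is, the Galois closure of `F⟮r 0⟯(√α)`. -/
def sqrtClosure (α : F⟮r 0⟯) : IntermediateField F Ω :=
  adjoin F (Set.range r ∪ {y | ∃ i, y ^ 2 = hr.embedding 0 i α})

variable {α β : F⟮r 0⟯} {y w : Fin 3 → Ω}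

theorem mem_fixingSubgroup_sqrtClosure_iff (hy : ∀ i, y i ^ 2 = hr.embedding 0 i α)
    {g : Ω ≃ₐ[F] Ω} :
    g ∈ (hr.sqrtClosure α).fixingSubgroup ↔ hr.permHom g = 1 ∧ ∀ i, g (y i) = y i := by
  rw [sqrtClosure, mem_fixingSubgroup_adjoin_iff, hr.permHom_eq_one_iff]
  constructor
  · exact fun h => ⟨fun i => h _ (.inl ⟨i, rfl⟩), fun i => h _ (.inr ⟨i, hy i⟩)⟩
  · rintro ⟨hgr, hgy⟩ v (⟨i, rfl⟩ | ⟨i, hv⟩)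
    · exact hgr i
    · obtain ⟨u, rfl⟩ := exists_units_mul_eq_of_sq_eq_sq (hv.trans (hy i).symm)
      rw [map_mul, map_intCast, hgy]

theorem ne_zero_of_sq_eq_embedding (hα : α ≠ 0) (hy : ∀ i, y i ^ 2 = hr.embedding 0 i α)
    (i : Fin 3) : y i ≠ 0 := fun h =>
  hα <| (map_eq_zero (hr.embedding 0 i)).1 (by rw [← hy, h, zero_pow two_ne_zero])

theorem sqrtClosure_eq_iff [IsGalois F Ω] (hy : ∀ i, y i ^ 2 = hr.embedding 0 i α)
    (hw : ∀ i, w i ^ 2 = hr.embedding 0 i β) :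
    hr.sqrtClosure α = hr.sqrtClosure β ↔
      ∀ g, hr.permHom g = 1 → ((∀ i, g (y i) = y i) ↔ ∀ i, g (w i) = w i) := by
  constructor
  · intro h g hg
    have := hr.mem_fixingSubgroup_sqrtClosure_iff hw (g := g)
    rw [← h, hr.mem_fixingSubgroup_sqrtClosure_iff hy] at this
    simpa [hg] using this
  · intro h
    refine eq_of_forall_mem_fixingSubgroup_iff fun g => ?_
    rw [hr.mem_fixingSubgroup_sqrtClosure_iff hy, hr.mem_fixingSubgroup_sqrtClosure_iff hw]
    exact and_congr_right (h g)

theorem exists_sq_eq_embedding [IsAlgClosed Ω] (α : F⟮r 0⟯) :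
    ∃ y : Fin 3 → Ω, ∀ i, y i ^ 2 = hr.embedding 0 i α := by
  choose y hy using fun i => IsAlgClosed.exists_pow_nat_eq (hr.embedding 0 i α) two_pos
  exact ⟨y, hy⟩

variable [IsGalois F Ω] [IsAlgClosed Ω] [NeZero (2 : Ω)]

theorem exists_signs_of_sq_eq_embedding (hα : α ≠ 0) (hN : IsSquare (Algebra.norm F α))
    (hy : ∀ i, y i ^ 2 = hr.embedding 0 i α) (g : Ω ≃ₐ[F] Ω) :
    ∃ δ : SignVec, ∀ i, g (y i) = (δ.1 i : ℤ) * y (hr.permHom g i) := by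
  have hsq (i : Fin 3) : g (y i) ^ 2 = y (hr.permHom g i) ^ 2 := by
    rw [← map_pow, hy, hy, hr.algEquiv_embedding]
  choose δ hδ using fun i => exists_units_mul_eq_of_sq_eq_sq (hsq i)
  refine ⟨⟨δ, ?_⟩, hδ⟩
  have hprod0 : ∏ i, y i ≠ 0 :=
    Finset.prod_ne_zero_iff.2 fun i _ => hr.ne_zero_of_sq_eq_embedding hα hy i
  have hfix : g (∏ i, y i) = ∏ i, y i := by
    obtain ⟨c, hc⟩ := hN
    have : (∏ i, y i) ^ 2 = algebraMap F Ω c ^ 2 := by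
      rw [← map_pow, sq c, ← hc, hr.algebraMap_norm, ← Finset.prod_pow]
      simp_rw [hy]
    obtain ⟨u, hu⟩ := exists_units_mul_eq_of_sq_eq_sq this
    rw [hu, map_mul, map_intCast, AlgEquiv.commutes]
  rw [map_prod, Finset.prod_congr rfl fun i _ => hδ i, Finset.prod_mul_distrib,
    Equiv.prod_comp (hr.permHom g) y, ← Int.cast_prod, ← Units.coe_prod] at hfix
  exact (intCast_units_mul_eq_self_iff hprod0).1 hfix

theorem isSignedSystem_of_sq_eq_embedding (hα : ¬ IsSquare α) (hN : IsSquare (Algebra.norm F α))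
    (hy : ∀ i, y i ^ 2 = hr.embedding 0 i α) : IsSignedSystem F y := by
  have hα0 : α ≠ 0 := by rintro rfl; exact hα .zero
  have hsigns := hr.exists_signs_of_sq_eq_embedding hα0 hN hy
  have hy0 := hr.ne_zero_of_sq_eq_embedding hα0 hy
  have realise_signs (ε : SignVec) : ∃ g, hr.permHom g = 1 ∧ ∀ i, g (y i) = (ε.1 i : ℤ) * y i := by
    by_cases hε : ε.1 = 1
    · exact ⟨1, map_one _, fun i => by simp [hε]⟩
    obtain ⟨g, hg, hgy⟩ : ∃ g, hr.permHom g = 1 ∧ g (y 0) ≠ y 0 := by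
      by_contra! h
      exact hα (hr.isSquare_of_isSquare_norm hN (by rw [hy, hr.embedding_self]) h)
    obtain ⟨δ, hδ⟩ := hsigns g
    simp only [hg, Equiv.Perm.one_apply] at hδ
    obtain ⟨σ, hσ⟩ := exists_perm_comp_eq (δ := δ) (fun h => hgy (by simp [hδ, h])) hε
    obtain ⟨h, rfl⟩ := hr.permHom_surjective σ
    obtain ⟨η, hη⟩ := hsigns h
    exact ⟨h⁻¹ * g * h, by simp [hg], fun i => by rw [inv_mul_mul_apply_of_signs hδ hη, hσ]⟩
  refine ⟨hy0, fun g => (hsigns g).imp fun δ hδ => ⟨_, hδ⟩, fun δ σ => ?_⟩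
  obtain ⟨h, rfl⟩ := hr.permHom_surjective σ
  obtain ⟨η, hη⟩ := hsigns h
  obtain ⟨g, -, hg⟩ := realise_signs ⟨δ.1 * η.1, by simp [Finset.prod_mul_distrib, δ.2, η.2]⟩
  refine ⟨h * g, fun i => ?_⟩
  simp only [AlgEquiv.mul_apply, hg, map_mul, map_intCast, hη, Pi.mul_apply, Units.val_mul,
    Int.cast_mul]
  rw [mul_assoc, ← mul_assoc _ _ (y _), intCast_units_mul_self, one_mul]

theorem sqrtClosure_eq_adjoin (hα : ¬ IsSquare α) (hN : IsSquare (Algebra.norm F α))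
    (hy : ∀ i, y i ^ 2 = hr.embedding 0 i α) : hr.sqrtClosure α = adjoin F (Set.range y) := by
  have hinj := (hr.isSignedSystem_of_sq_eq_embedding hα hN hy).isSymmetricSystem_sq.injective
  refine eq_of_forall_mem_fixingSubgroup_iff fun g => ?_
  rw [hr.mem_fixingSubgroup_sqrtClosure_iff hy, mem_fixingSubgroup_adjoin_iff, Set.forall_mem_range,
    and_iff_right_iff_imp]
  refine fun h => Equiv.ext fun i => hinj ?_
  dsimp only
  rw [Equiv.Perm.one_apply, hy, ← hr.algEquiv_embedding, ← hy, map_pow, h]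

theorem signs_eq_signs (hα : α ≠ 0) (hβ : β ≠ 0) (hNα : IsSquare (Algebra.norm F α))
    (hNβ : IsSquare (Algebra.norm F β)) (hy : ∀ i, y i ^ 2 = hr.embedding 0 i α)
    (hw : ∀ i, w i ^ 2 = hr.embedding 0 i β) (h : hr.sqrtClosure α = hr.sqrtClosure β)
    {g : Ω ≃ₐ[F] Ω} (hg : hr.permHom g = 1) {δ η : SignVec} (hδ : ∀ i, g (y i) = (δ.1 i : ℤ) * y i)
    (hη : ∀ i, g (w i) = (η.1 i : ℤ) * w i) : δ = η := by
  have hy0 := hr.ne_zero_of_sq_eq_embedding hα hy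
  have hw0 := hr.ne_zero_of_sq_eq_embedding hβ hw
  rw [hr.sqrtClosure_eq_iff hy hw] at h
  have hiff : δ.1 = 1 ↔ η.1 = 1 := by
    simp only [funext_iff, Pi.one_apply]
    simpa only [hδ, hη, intCast_units_mul_eq_self_iff (hy0 _),
      intCast_units_mul_eq_self_iff (hw0 _)] using h g hg
  by_contra hne
  by_cases hδ1 : δ.1 = 1
  · exact hne (Subtype.ext (hδ1.trans (hiff.1 hδ1).symm))
  obtain ⟨σ, hσδ, i, hi⟩ := exists_perm_fix_and_ne hδ1 (mt hiff.2 hδ1) hne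
  obtain ⟨t, rfl⟩ := hr.permHom_surjective σ
  obtain ⟨_, hty⟩ := hr.exists_signs_of_sq_eq_embedding hα hNα hy t
  obtain ⟨_, htw⟩ := hr.exists_signs_of_sq_eq_embedding hβ hNβ hw t
  have hfix (j : Fin 3) : (g * (t⁻¹ * g * t)) (y j) = y j := by
    rw [AlgEquiv.mul_apply, inv_mul_mul_apply_of_signs hδ hty, map_mul, map_intCast, hδ, hσδ,
      ← mul_assoc, intCast_units_mul_self, one_mul]
  have := (h (g * (t⁻¹ * g * t)) (by simp [hg])).1 hfix i
  rw [AlgEquiv.mul_apply, inv_mul_mul_apply_of_signs hη htw, map_mul, map_intCast, hη, ← mul_assoc,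
    ← Int.cast_mul, ← Units.val_mul, intCast_units_mul_eq_self_iff (hw0 i)] at this
  exact hi (by rwa [mul_eq_one_iff_eq_inv, Int.units_inv_eq_self] at this)

theorem sqrtClosure_eq_sqrtClosure_iff (hα : α ≠ 0) (hβ : β ≠ 0)
    (hNα : IsSquare (Algebra.norm F α)) (hNβ : IsSquare (Algebra.norm F β)) :
    hr.sqrtClosure α = hr.sqrtClosure β ↔ IsSquare (α * β) := by
  obtain ⟨y, hy⟩ := hr.exists_sq_eq_embedding α
  obtain ⟨w, hw⟩ := hr.exists_sq_eq_embedding β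
  constructor
  · intro h
    refine hr.isSquare_of_isSquare_norm (y := y 0 * w 0) (by rw [map_mul]; exact hNα.mul hNβ)
      (by rw [mul_pow, hy, hw, ← map_mul, hr.embedding_self]) fun g hg => ?_
    obtain ⟨δ, hδ⟩ := hr.exists_signs_of_sq_eq_embedding hα hNα hy g
    obtain ⟨η, hη⟩ := hr.exists_signs_of_sq_eq_embedding hβ hNβ hw g
    simp only [hg, Equiv.Perm.one_apply] at hδ hη
    obtain rfl := hr.signs_eq_signs hα hβ hNα hNβ hy hw h hg hδ hη
    rw [map_mul, hδ, hη]
    linear_combination (y 0 * w 0) * intCast_units_mul_self (Ω := Ω) (δ.1 0)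
  · rintro ⟨γ, hγ⟩
    refine (hr.sqrtClosure_eq_iff hy hw).2 fun g hg => forall_congr' fun i => ?_
    have hsq : (y i * w i) ^ 2 = hr.embedding 0 i γ ^ 2 := by
      rw [mul_pow, hy, hw, ← map_mul, hγ, map_mul, sq]
    have hprod : g (y i * w i) = y i * w i := by
      obtain ⟨u, hu⟩ := exists_units_mul_eq_of_sq_eq_sq hsq
      rw [hu, map_mul, map_intCast, hr.algEquiv_embedding, hg, Equiv.Perm.one_apply]
    rw [map_mul] at hprod
    constructor
    · intro h
      exact mul_left_cancel₀ (hr.ne_zero_of_sq_eq_embedding hα hy i) (by rwa [h] at hprod)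
    · intro h
      exact mul_right_cancel₀ (hr.ne_zero_of_sq_eq_embedding hβ hw i) (by rwa [h] at hprod)

end IsSymmetricSystem
end Resolvent

section Count

variable {F Ω : Type*} [Field F] [Field Ω] [Algebra F Ω]

theorem adjoin_range_le_of_forall_exists_sq_eq {ι κ : Type*} {y : ι → Ω} {z : κ → Ω}
    (h : ∀ j, ∃ k, y j ^ 2 = z k ^ 2) : adjoin F (Set.range y) ≤ adjoin F (Set.range z) := by
  rw [adjoin_le_iff]
  rintro _ ⟨j, rfl⟩
  obtain ⟨k, hk⟩ := h j
  obtain ⟨u, hu⟩ := exists_units_mul_eq_of_sq_eq_sq hk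
  rw [hu]
  exact mul_mem (intCast_mem _ _) (subset_adjoin F _ ⟨k, rfl⟩)

namespace IsSignedSystem

variable {z : Fin 3 → Ω} (hz : IsSignedSystem F z)
include hz

theorem prod_mem_range_algebraMap [IsGalois F Ω] : ∏ i, z i ∈ Set.range (algebraMap F Ω) := by
  rw [InfiniteGalois.mem_range_algebraMap_iff_fixed]
  intro g
  obtain ⟨δ, σ, h⟩ := hz.exists_signs g
  rw [map_prod, Finset.prod_congr rfl fun i _ => h i, Finset.prod_mul_distrib, ← Int.cast_prod,
    ← Units.coe_prod, δ.2, Equiv.prod_comp σ z, Units.val_one, Int.cast_one, one_mul]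

theorem notMem_adjoin_simple_sq [NeZero (2 : Ω)] (i : Fin 3) : z i ∉ F⟮z i ^ 2⟯ := by
  intro hmem
  obtain ⟨j, hj⟩ := exists_ne i
  obtain ⟨ε, hεi, -⟩ := exists_signVec_apply_ne hj.symm
  obtain ⟨g, hg⟩ := hz.exists_algEquiv ε 1
  have hgi : g (z i) = ((-1 : ℤˣ) : ℤ) * z i := by rw [hg, hεi, Equiv.Perm.one_apply]
  have hfix : g ∈ F⟮z i ^ 2⟯.fixingSubgroup := by
    rw [mem_fixingSubgroup_adjoin_iff]
    rintro _ rfl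
    rw [map_pow, hgi, mul_pow, sq, intCast_units_mul_self, one_mul]
  have := (IntermediateField.mem_fixingSubgroup_iff _ _).1 hfix _ hmem
  rw [hgi, intCast_units_mul_eq_self_iff (hz.ne_zero i)] at this
  exact absurd this (by decide)

end IsSignedSystem

section
variable [IsGalois F Ω] [IsAlgClosed Ω] [NeZero (2 : Ω)] {r : Fin 3 → Ω}
  (hr : IsSymmetricSystem F r)

theorem IsSymmetricSystem.exists_sqrtClosure_eq_adjoin {z : Fin 3 → Ω} (hz : IsSignedSystem F z)
    {i : Fin 3} (hi : z i ^ 2 ∈ F⟮r 0⟯) :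
    ∃ α : F⟮r 0⟯, ¬ IsSquare α ∧ IsSquare (Algebra.norm F α) ∧
      hr.sqrtClosure α = adjoin F (Set.range z) := by
  have hz2 := hz.isSymmetricSystem_sq
  have := adjoin.finiteDimensional (Algebra.IsIntegral.isIntegral (R := F) (r 0))
  have hE : F⟮z i ^ 2⟯ = F⟮r 0⟯ := eq_of_le_of_finrank_eq (adjoin_simple_le_iff.2 hi)
    ((hz2.finrank_adjoin_simple i).trans (hr.finrank_adjoin_simple 0).symm)
  let α : F⟮r 0⟯ := ⟨z i ^ 2, hi⟩
  have hα : ¬ IsSquare α := by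
    rintro ⟨γ, hγ⟩
    have : z i ^ 2 = (γ : Ω) ^ 2 := by rw [sq (γ : Ω)]; exact congr_arg Subtype.val hγ
    obtain ⟨u, hu⟩ := exists_units_mul_eq_of_sq_eq_sq this
    refine hz.notMem_adjoin_simple_sq i ?_
    rw [hE, hu]
    exact mul_mem (intCast_mem _ _) γ.2
  have hN : IsSquare (Algebra.norm F α) := by
    obtain ⟨c, hc⟩ := hz.prod_mem_range_algebraMap
    refine ⟨c, (algebraMap F Ω).injective ?_⟩
    rw [hz2.algebraMap_norm_of_eq hE rfl, Finset.prod_pow, map_mul, hc, sq]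
  obtain ⟨y, hy⟩ := hr.exists_sq_eq_embedding α
  have hconj (g : Ω ≃ₐ[F] Ω) : y (hr.permHom g 0) ^ 2 = z (hz2.permHom g i) ^ 2 := by
    rw [hy, ← hr.algEquiv_coe, ← hz2.apply_eq g i]
  refine ⟨α, hα, hN, (hr.sqrtClosure_eq_adjoin hα hN hy).trans (le_antisymm ?_ ?_)⟩ <;>
    refine adjoin_range_le_of_forall_exists_sq_eq fun j => ?_
  · obtain ⟨g, hg⟩ := hr.permHom_surjective (Equiv.swap 0 j)
    exact ⟨_, by rw [← hconj g, hg, Equiv.swap_apply_left]⟩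
  · obtain ⟨g, hg⟩ := hz2.permHom_surjective (Equiv.swap i j)
    exact ⟨_, by rw [hconj g, hg, Equiv.swap_apply_left]⟩
end

theorem ncard_image_compl_subgroup {G X : Type*} [Group G] {S : Subgroup G} {f : G → X}
    (hf : ∀ a b, f a = f b ↔ a⁻¹ * b ∈ S) : (f '' (S : Set G)ᶜ).ncard = S.index - 1 := by
  let φ : G ⧸ S → X := Quotient.lift f fun a b hab => (hf a b).2 (QuotientGroup.leftRel_apply.1 hab)
  have hφ : Function.Injective φ := by
    rintro ⟨a⟩ ⟨b⟩ h
    exact QuotientGroup.eq.2 ((hf a b).1 h)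
  have himage : f '' (S : Set G)ᶜ = Set.range φ \ {f 1} := by
    ext x
    constructor
    · rintro ⟨a, ha, rfl⟩
      refine ⟨⟨a, rfl⟩, fun h => ha ?_⟩
      simpa using (hf a 1).1 h
    · rintro ⟨⟨⟨a⟩, rfl⟩, ha⟩
      refine ⟨a, fun h => ha ((hf a 1).2 ?_), rfl⟩
      simpa using h
  rw [himage, Set.ncard_sdiff_singleton_of_mem (show f 1 ∈ Set.range φ from ⟨(1 : G), rfl⟩),
    Set.ncard_range_of_injective hφ, Subgroup.index]

theorem mem_range_powMonoidHom_two_iff {K : Type*} [Field K] {u : Kˣ} :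
    u ∈ (powMonoidHom 2 : Kˣ →* Kˣ).range ↔ IsSquare (u : K) := by
  constructor
  · rintro ⟨v, rfl⟩
    exact ⟨v, by simp [sq]⟩
  · rintro ⟨v, hv⟩
    have hv0 : v ≠ 0 := by rintro rfl; exact u.ne_zero (by simp at hv)
    exact ⟨Units.mk0 v hv0, Units.ext (by simp [hv, sq])⟩

theorem isSquare_inv_mul_iff {G : Type*} [CommGroupWithZero G] {a b : G} (ha : a ≠ 0) :
    IsSquare (a⁻¹ * b) ↔ IsSquare (a * b) := by
  refine ⟨fun h => ?_, fun h => ?_⟩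
  · simpa [sq, mul_assoc, ha] using (IsSquare.sq a).mul h
  · simpa [sq, mul_assoc, ha] using (IsSquare.sq a⁻¹).mul h

/-- The units of `K` whose norm to `F` is an `n`-th power. -/
noncomputable def normPowUnits (F K : Type*) [Field F] [Field K] [Algebra F K] (n : ℕ) :
    Subgroup Kˣ :=
  (powMonoidHom n : Fˣ →* Fˣ).range.comap (Units.map (Algebra.norm F))

theorem mem_normPowUnits_two_iff {K : Type*} [Field K] [Algebra F K] {u : Kˣ} :
    u ∈ normPowUnits F K 2 ↔ IsSquare (Algebra.norm F (u : K)) := by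
  rw [normPowUnits, Subgroup.mem_comap, mem_range_powMonoidHom_two_iff, Units.coe_map]

theorem range_norm_sup_range_powMonoidHom {K : Type*} [Field K] [Algebra F K] {n : ℕ}
    (hn : (Module.finrank F K).Coprime n) :
    (Units.map (Algebra.norm F : K →* F)).range ⊔ (powMonoidHom n : Fˣ →* Fˣ).range = ⊤ := by
  refine eq_top_iff.2 fun a _ => ?_
  have hnorm : Units.map (Algebra.norm F) (Units.map (algebraMap F K : F →* K) a) =
      a ^ Module.finrank F K := Units.ext (by simp [Algebra.norm_algebraMap])
  have hbezout := Nat.gcd_eq_gcd_ab (Module.finrank F K) n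
  rw [← zpow_one a, ← Nat.cast_one, ← hn.gcd_eq_one, hbezout, zpow_add, zpow_mul, zpow_mul,
    zpow_natCast, ← hnorm]
  exact Subgroup.mul_mem_sup (zpow_mem (MonoidHom.mem_range.2 ⟨_, rfl⟩) _)
    (zpow_mem (MonoidHom.mem_range.2 ⟨a, (zpow_natCast a n).symm⟩) _)

theorem relIndex_normPowUnits_mul_index {K : Type*} [Field K] [Algebra F K] {n : ℕ}
    (hn : (Module.finrank F K).Coprime n) :
    (powMonoidHom n : Kˣ →* Kˣ).range.relIndex (normPowUnits F K n) *
      (powMonoidHom n : Fˣ →* Fˣ).range.index = (powMonoidHom n : Kˣ →* Kˣ).range.index := by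
  have hle : (powMonoidHom n : Kˣ →* Kˣ).range ≤ normPowUnits F K n := by
    rintro _ ⟨v, rfl⟩
    exact ⟨Units.map (Algebra.norm F) v, (map_pow _ v n).symm⟩
  rw [← Subgroup.relIndex_mul_index hle, normPowUnits, Subgroup.index_comap,
    ← Subgroup.relIndex_sup_right (Units.map (Algebra.norm F)).range,
    range_norm_sup_range_powMonoidHom hn, Subgroup.relIndex_top_right]

theorem IsSymmetricSystem.card_isGalois_mulEquiv_perm_fin_four [IsGalois F Ω] [IsAlgClosed Ω]
    [NeZero (2 : Ω)] {r : Fin 3 → Ω} (hr : IsSymmetricSystem F r)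
    (hU : ∀ x : Fin 3 → Ω, IsSymmetricSystem F x → ∃ i, x i ∈ F⟮r 0⟯) :
    Nat.card {K : IntermediateField F Ω // FiniteDimensional F K ∧ IsGalois F K ∧
      Nonempty ((K ≃ₐ[F] K) ≃* Equiv.Perm (Fin 4))} =
    (powMonoidHom 2 : F⟮r 0⟯ˣ →* F⟮r 0⟯ˣ).range.relIndex (normPowUnits F F⟮r 0⟯ 2) - 1 := by
  let S := (powMonoidHom 2 : F⟮r 0⟯ˣ →* F⟮r 0⟯ˣ).range.subgroupOf (normPowUnits F F⟮r 0⟯ 2)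
  let f (u : normPowUnits F F⟮r 0⟯ 2) : IntermediateField F Ω := hr.sqrtClosure (u : F⟮r 0⟯ˣ)
  have mem_S {u : normPowUnits F F⟮r 0⟯ 2} : u ∈ S ↔ IsSquare ((u : F⟮r 0⟯ˣ) : F⟮r 0⟯) := by
    rw [Subgroup.mem_subgroupOf, mem_range_powMonoidHom_two_iff]
  have hN (u : normPowUnits F F⟮r 0⟯ 2) : IsSquare (Algebra.norm F ((u : F⟮r 0⟯ˣ) : F⟮r 0⟯)) :=
    mem_normPowUnits_two_iff.1 u.2
  have hf (a b) : f a = f b ↔ a⁻¹ * b ∈ S := by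
    rw [hr.sqrtClosure_eq_sqrtClosure_iff (Units.ne_zero _) (Units.ne_zero _) (hN a) (hN b), mem_S,
      Subgroup.coe_mul, Subgroup.coe_inv, Units.val_mul, Units.val_inv_eq_inv_val,
      isSquare_inv_mul_iff (Units.ne_zero _)]
  have himage : {K : IntermediateField F Ω | FiniteDimensional F K ∧ IsGalois F K ∧
      Nonempty ((K ≃ₐ[F] K) ≃* Equiv.Perm (Fin 4))} = f '' (S : Set _)ᶜ := by
    ext K
    rw [Set.mem_ofPred_eq, isGalois_mulEquiv_perm_fin_four_iff]
    constructor
    · rintro ⟨z, hz, rfl⟩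
      obtain ⟨i, hi⟩ := hU _ hz.isSymmetricSystem_sq
      obtain ⟨α, hα, hNα, hK⟩ := hr.exists_sqrtClosure_eq_adjoin hz hi
      have hα0 : α ≠ 0 := by rintro rfl; exact hα .zero
      exact ⟨⟨Units.mk0 α hα0, mem_normPowUnits_two_iff.2 hNα⟩, mem_S.not.2 hα, hK⟩
    · rintro ⟨u, hu, rfl⟩
      obtain ⟨y, hy⟩ := hr.exists_sq_eq_embedding (u : F⟮r 0⟯ˣ)
      exact ⟨y, hr.isSignedSystem_of_sq_eq_embedding (mem_S.not.1 hu) (hN u) hy,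
        (hr.sqrtClosure_eq_adjoin (mem_S.not.1 hu) (hN u) hy).symm⟩
  exact (congr_arg Set.ncard himage).trans (ncard_image_compl_subgroup hf)

end Count

/-! ### Cubic extensions in the absence of cube roots of unity -/

section Kummer

variable {F Ω : Type*} [Field F] [Field Ω] [Algebra F Ω] {ω : Ω}

theorem pow_val_add_of_pow_eq_one {n : ℕ} (hω : ω ^ n = 1) (i j : Fin n) :
    ω ^ ((i + j : Fin n) : ℕ) = ω ^ (i : ℕ) * ω ^ (j : ℕ) := by
  rw [Fin.val_add, ← pow_add, ← pow_eq_pow_mod _ hω]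

theorem exists_eq_pow_mul_of_pow_eq_pow {n : ℕ} [NeZero n] (hω : IsPrimitiveRoot ω n) {y w : Ω}
    (h : y ^ n = w ^ n) : ∃ j : Fin n, y = ω ^ (j : ℕ) * w := by
  by_cases hw : w = 0
  · refine ⟨0, ?_⟩
    simpa [hw, NeZero.ne n] using h
  obtain ⟨j, hj, hj'⟩ := hω.eq_pow_of_pow_eq_one (ξ := y / w) (by
    rw [div_pow, h, div_self (pow_ne_zero _ hw)])
  exact ⟨⟨j, hj⟩, by rw [hj', div_mul_cancel₀ _ hw]⟩

theorem eq_or_eq_sq_of_isPrimitiveRoot_three (hω : IsPrimitiveRoot ω 3) {ζ : Ω}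
    (hζ : IsPrimitiveRoot ζ 3) : ζ = ω ∨ ζ = ω ^ 2 := by
  obtain ⟨i, hi, rfl⟩ := hω.eq_pow_of_pow_eq_one hζ.pow_eq_one
  interval_cases i
  · exact absurd (pow_zero ω) (hζ.ne_one (by decide))
  · simp
  · simp

theorem algEquiv_apply_eq_or_eq_sq (hω : IsPrimitiveRoot ω 3) (g : Ω ≃ₐ[F] Ω) :
    g ω = ω ∨ g ω = ω ^ 2 :=
  eq_or_eq_sq_of_isPrimitiveRoot_three hω (hω.map_of_injective g.injective)

theorem exists_algEquiv_apply_eq_sq [IsGalois F Ω] (hω : IsPrimitiveRoot ω 3)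
    (hF : ¬ ∃ ζ : F, IsPrimitiveRoot ζ 3) : ∃ g : Ω ≃ₐ[F] Ω, g ω = ω ^ 2 := by
  by_contra! h
  obtain ⟨ζ, rfl⟩ := (InfiniteGalois.mem_range_algebraMap_iff_fixed (k := F) ω).2 fun g =>
    (algEquiv_apply_eq_or_eq_sq hω g).resolve_right (h g)
  exact hF ⟨ζ, hω.of_map_of_injective (algebraMap F Ω).injective⟩

theorem exists_eq_addLeft_or_eq_subLeft (σ : Equiv.Perm (Fin 3)) :
    (Equiv.Perm.sign σ = 1 ∧ ∃ j, σ = Equiv.addLeft j) ∨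
      (Equiv.Perm.sign σ = -1 ∧ ∃ j, σ = Equiv.subLeft j) := by
  revert σ; decide

section CubeRoot

variable [IsGalois F Ω] {a : F} {ρ : Ω} (hω : IsPrimitiveRoot ω 3) (ha : ∀ b : F, b ^ 3 ≠ a)
  (hρ : ρ ^ 3 = algebraMap F Ω a)
include hω ha hρ

theorem exists_algEquiv_apply_eq_pow_mul (j : ℕ) : ∃ g : Ω ≃ₐ[F] Ω, g ρ = ω ^ j * ρ := by
  have hmin {y : Ω} (hy : y ^ 3 = algebraMap F Ω a) :
      minpoly F y = Polynomial.X ^ 3 - Polynomial.C a :=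
    (minpoly.eq_of_irreducible_of_monic (X_pow_sub_C_irreducible_of_prime Nat.prime_three ha)
      (by simp [hy]) (Polynomial.monic_X_pow_sub_C a three_ne_zero)).symm
  have hj : (ω ^ j * ρ) ^ 3 = algebraMap F Ω a := by
    rw [mul_pow, ← pow_mul, mul_comm j, pow_mul, hω.pow_eq_one, one_pow, one_mul, hρ]
  exact isConjRoot_iff_exists_algEquiv.1 ((hmin hj).trans (hmin hρ).symm)

-- Two automorphisms inverting `ω` compose to one that fixes it.
theorem exists_algEquiv_apply_eq_self_and_apply_eq_pow_mul (j : ℕ) :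
    ∃ g : Ω ≃ₐ[F] Ω, g ω = ω ∧ g ρ = ω ^ j * ρ := by
  have hpow (k : ℕ) : ω ^ (3 * k) = 1 := by rw [pow_mul, hω.pow_eq_one, one_pow]
  obtain ⟨g, hg⟩ := exists_algEquiv_apply_eq_pow_mul hω ha hρ j
  rcases algEquiv_apply_eq_or_eq_sq hω g with hgω | hgω
  · exact ⟨g, hgω, hg⟩
  obtain ⟨h, hh⟩ := exists_algEquiv_apply_eq_pow_mul hω ha hρ (2 * j)
  rcases algEquiv_apply_eq_or_eq_sq hω h with hhω | hhω
  · refine ⟨h * h, by simp [hhω], ?_⟩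
    simp only [AlgEquiv.mul_apply, hh, map_mul, map_pow, hhω]
    linear_combination ω ^ j * ρ * hpow j
  · refine ⟨h * g, ?_, ?_⟩
    · simp only [AlgEquiv.mul_apply, hgω, map_pow, hhω]
      linear_combination ω * hω.pow_eq_one
    · simp only [AlgEquiv.mul_apply, hg, map_mul, map_pow, hh, hhω]
      linear_combination ω ^ j * ρ * hpow j

theorem exists_algEquiv_apply_eq_sq_and_apply_eq_pow_mul (hF : ¬ ∃ ζ : F, IsPrimitiveRoot ζ 3)
    (j : Fin 3) : ∃ g : Ω ≃ₐ[F] Ω, g ω = ω ^ 2 ∧ g ρ = ω ^ (j : ℕ) * ρ := by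
  obtain ⟨t, ht⟩ := exists_algEquiv_apply_eq_sq hω hF
  obtain ⟨k, hk⟩ := exists_eq_pow_mul_of_pow_eq_pow hω (y := t ρ) (w := ρ)
    (by rw [← map_pow, hρ, AlgEquiv.commutes])
  obtain ⟨s, hs, hsρ⟩ :=
    exists_algEquiv_apply_eq_self_and_apply_eq_pow_mul hω ha hρ ((j - k : Fin 3) : ℕ)
  refine ⟨s * t, by rw [AlgEquiv.mul_apply, ht, map_pow, hs], ?_⟩
  rw [AlgEquiv.mul_apply, hk, map_mul, map_pow, hs, hsρ, ← mul_assoc,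
    ← pow_val_add_of_pow_eq_one hω.pow_eq_one, add_sub_cancel]

theorem isSymmetricSystem_pow_mul (hF : ¬ ∃ ζ : F, IsPrimitiveRoot ζ 3) :
    IsSymmetricSystem F fun i : Fin 3 => ω ^ (i : ℕ) * ρ := by
  have hρ0 : ρ ≠ 0 := by
    rintro rfl
    exact ha 0 ((algebraMap F Ω).injective (by simpa using hρ))
  have hadd {g : Ω ≃ₐ[F] Ω} {j : Fin 3} (hgω : g ω = ω) (hgρ : g ρ = ω ^ (j : ℕ) * ρ) (i : Fin 3) :
      g (ω ^ (i : ℕ) * ρ) = ω ^ ((Equiv.addLeft j i : Fin 3) : ℕ) * ρ := by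
    rw [map_mul, map_pow, hgω, hgρ, Equiv.coe_addLeft, pow_val_add_of_pow_eq_one hω.pow_eq_one]
    ring
  have hsub {g : Ω ≃ₐ[F] Ω} {j : Fin 3} (hgω : g ω = ω ^ 2) (hgρ : g ρ = ω ^ (j : ℕ) * ρ)
      (i : Fin 3) : g (ω ^ (i : ℕ) * ρ) = ω ^ ((Equiv.subLeft j i : Fin 3) : ℕ) * ρ := by
    have hinv : (ω ^ (i : ℕ)) ^ 3 = 1 := by
      rw [← pow_mul, mul_comm, pow_mul, hω.pow_eq_one, one_pow]
    have hj := pow_val_add_of_pow_eq_one hω.pow_eq_one (j - i) i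
    rw [sub_add_cancel] at hj
    rw [map_mul, map_pow, hgω, hgρ, Equiv.subLeft_apply, hj]
    linear_combination ω ^ ((j - i : Fin 3) : ℕ) * ρ * hinv
  refine ⟨fun i j hij => Fin.ext (hω.pow_inj i.2 j.2 (mul_right_cancel₀ hρ0 hij)), fun g => ?_,
    fun σ => ?_⟩
  · obtain ⟨j, hj⟩ := exists_eq_pow_mul_of_pow_eq_pow hω (y := g ρ) (w := ρ)
      (by rw [← map_pow, hρ, AlgEquiv.commutes])
    rcases algEquiv_apply_eq_or_eq_sq hω g with hgω | hgω
    · exact ⟨_, hadd hgω hj⟩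
    · exact ⟨_, hsub hgω hj⟩
  · obtain ⟨-, j, rfl⟩ | ⟨-, j, rfl⟩ := exists_eq_addLeft_or_eq_subLeft σ
    · obtain ⟨g, hgω, hgρ⟩ := exists_algEquiv_apply_eq_self_and_apply_eq_pow_mul hω ha hρ j
      exact ⟨g, hadd hgω hgρ⟩
    · obtain ⟨g, hgω, hgρ⟩ := exists_algEquiv_apply_eq_sq_and_apply_eq_pow_mul hω ha hρ hF j
      exact ⟨g, hsub hgω hgρ⟩

end CubeRoot
end Kummer

section Lagrange

variable {F Ω : Type*} [Field F] [Field Ω] [Algebra F Ω] {ω : Ω}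

/-- The Lagrange resolvent of the family `x` with respect to the root of unity `ω`. -/
def lagrangeResolvent {n : ℕ} (ω : Ω) (x : Fin n → Ω) : Ω := ∑ i : Fin n, ω ^ (i : ℕ) * x i

theorem pow_mul_lagrangeResolvent_comp_addLeft {n : ℕ} [NeZero n] (hω : ω ^ n = 1) (x : Fin n → Ω)
    (j : Fin n) :
    ω ^ (j : ℕ) * lagrangeResolvent ω (x ∘ Equiv.addLeft j) = lagrangeResolvent ω x := by
  rw [lagrangeResolvent, lagrangeResolvent, Finset.mul_sum,
    ← Equiv.sum_comp (Equiv.addLeft j) fun i => ω ^ (i : ℕ) * x i]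
  refine Finset.sum_congr rfl fun i _ => ?_
  rw [← mul_assoc, ← pow_val_add_of_pow_eq_one hω]
  rfl

theorem lagrangeResolvent_comp_subLeft (hω : ω ^ 3 = 1) (x : Fin 3 → Ω) (j : Fin 3) :
    lagrangeResolvent ω (x ∘ Equiv.subLeft j) =
      ω ^ (j : ℕ) * lagrangeResolvent (ω ^ 2) x := by
  rw [lagrangeResolvent, lagrangeResolvent, Finset.mul_sum,
    ← Equiv.sum_comp (Equiv.subLeft j) fun i => ω ^ (j : ℕ) * ((ω ^ 2) ^ (i : ℕ) * x i)]
  refine Finset.sum_congr rfl fun i _ => ?_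
  have hj := pow_val_add_of_pow_eq_one hω i (j - i)
  rw [add_sub_cancel] at hj
  have hinv : (ω ^ ((j - i : Fin 3) : ℕ)) ^ 3 = 1 := by
    rw [← pow_mul, mul_comm, pow_mul, hω, one_pow]
  simp only [Function.comp_apply, Equiv.subLeft_apply, hj]
  linear_combination - ω ^ (i : ℕ) * x (j - i) * hinv

theorem lagrangeResolvent_comp_pow_of_sign_eq_one (hω : ω ^ 3 = 1) (x : Fin 3 → Ω)
    {σ : Equiv.Perm (Fin 3)} (hσ : Equiv.Perm.sign σ = 1) :
    lagrangeResolvent ω (x ∘ σ) ^ 3 = lagrangeResolvent ω x ^ 3 := by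
  obtain ⟨-, j, rfl⟩ | ⟨h, -⟩ := exists_eq_addLeft_or_eq_subLeft σ
  · rw [← pow_mul_lagrangeResolvent_comp_addLeft hω x j, mul_pow, ← pow_mul, mul_comm (j : ℕ),
      pow_mul, hω, one_pow, one_mul]
  · exact absurd (hσ.symm.trans h) (by decide)

theorem lagrangeResolvent_comp_pow_of_sign_eq_neg_one (hω : ω ^ 3 = 1) (x : Fin 3 → Ω)
    {σ : Equiv.Perm (Fin 3)} (hσ : Equiv.Perm.sign σ = -1) :
    lagrangeResolvent ω (x ∘ σ) ^ 3 = lagrangeResolvent (ω ^ 2) x ^ 3 := by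
  obtain ⟨h, -⟩ | ⟨-, j, rfl⟩ := exists_eq_addLeft_or_eq_subLeft σ
  · exact absurd (hσ.symm.trans h) (by decide)
  · rw [lagrangeResolvent_comp_subLeft hω, mul_pow, ← pow_mul, mul_comm (j : ℕ), pow_mul, hω,
      one_pow, one_mul]

theorem sq_sq_of_pow_three_eq_one (hω : ω ^ 3 = 1) : (ω ^ 2) ^ 2 = ω := by
  linear_combination ω * hω

theorem two_mul_lagrangeResolvent_mul (hω : IsPrimitiveRoot ω 3) (x : Fin 3 → Ω) :
    2 * (lagrangeResolvent ω x * lagrangeResolvent (ω ^ 2) x) =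
      3 * ∑ i, x i ^ 2 - (∑ i, x i) ^ 2 := by
  have hsum : 1 + ω + ω ^ 2 = 0 := by
    simpa [Finset.sum_range_succ] using hω.geom_sum_eq_zero (by decide)
  simp only [lagrangeResolvent, Fin.sum_univ_three, Fin.val_zero, Fin.val_one, Fin.val_two]
  linear_combination
    2 * (x 0 * x 1 + x 0 * x 2 + x 1 * x 2) * hsum + 2 * (x 1 ^ 2 + (ω ^ 3 + 1) * x 2 ^ 2 +
      ω * x 0 * x 2 + (ω ^ 2 + ω) * x 1 * x 2) * hω.pow_eq_one

theorem lagrangeResolvent_add (hω : IsPrimitiveRoot ω 3) (x : Fin 3 → Ω) :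
    lagrangeResolvent ω x + lagrangeResolvent (ω ^ 2) x + ∑ i, x i = 3 * x 0 := by
  have hsum : 1 + ω + ω ^ 2 = 0 := by
    simpa [Finset.sum_range_succ] using hω.geom_sum_eq_zero (by decide)
  simp only [lagrangeResolvent, Fin.sum_univ_three, Fin.val_zero, Fin.val_one, Fin.val_two]
  linear_combination (x 1 + x 2) * hsum + ω * x 2 * hω.pow_eq_one

namespace IsSymmetricSystem

variable {x : Fin 3 → Ω} (hx : IsSymmetricSystem F x)
include hx

theorem map_lagrangeResolvent_eq (g : Ω ≃ₐ[F] Ω) :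
    g (lagrangeResolvent ω x) = lagrangeResolvent (g ω) (x ∘ hx.permHom g) := by
  simp only [lagrangeResolvent, map_sum, map_mul, map_pow, hx.apply_eq, Function.comp_apply]

theorem map_lagrangeResolvent_pow_eq_self (hω : IsPrimitiveRoot ω 3) {g : Ω ≃ₐ[F] Ω}
    (h : Equiv.Perm.sign (hx.permHom g) = 1 ↔ g ω = ω) :
    g (lagrangeResolvent ω x ^ 3) = lagrangeResolvent ω x ^ 3 := by
  have hω2 : (ω ^ 2) ^ 3 = 1 := (hω.pow_of_coprime 2 (by decide)).pow_eq_one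
  rw [map_pow, hx.map_lagrangeResolvent_eq]
  rcases Int.units_eq_one_or (Equiv.Perm.sign (hx.permHom g)) with hσ | hσ
  · rw [h.1 hσ, lagrangeResolvent_comp_pow_of_sign_eq_one hω.pow_eq_one x hσ]
  · have hgω := (algEquiv_apply_eq_or_eq_sq hω g).resolve_left fun hg => by
      simp [h.2 hg] at hσ
    rw [hgω, lagrangeResolvent_comp_pow_of_sign_eq_neg_one hω2 x hσ,
      sq_sq_of_pow_three_eq_one hω.pow_eq_one]

theorem map_lagrangeResolvent_pow_eq_sq (hω : IsPrimitiveRoot ω 3) {g : Ω ≃ₐ[F] Ω}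
    (h : ¬ (Equiv.Perm.sign (hx.permHom g) = 1 ↔ g ω = ω)) :
    g (lagrangeResolvent ω x ^ 3) = lagrangeResolvent (ω ^ 2) x ^ 3 := by
  have hω2 : (ω ^ 2) ^ 3 = 1 := (hω.pow_of_coprime 2 (by decide)).pow_eq_one
  rw [map_pow, hx.map_lagrangeResolvent_eq]
  rcases Int.units_eq_one_or (Equiv.Perm.sign (hx.permHom g)) with hσ | hσ
  · have hgω := (algEquiv_apply_eq_or_eq_sq hω g).resolve_left fun hg => h (by simp [hσ, hg])
    rw [hgω, lagrangeResolvent_comp_pow_of_sign_eq_one hω2 x hσ]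
  · have hgω : g ω = ω := by
      by_contra hg
      exact h (by simp [hσ, hg])
    rw [hgω, lagrangeResolvent_comp_pow_of_sign_eq_neg_one hω.pow_eq_one x hσ]

theorem sum_pow_mem_bot [IsGalois F Ω] (k : ℕ) :
    ∑ i, x i ^ k ∈ (⊥ : IntermediateField F Ω) := by
  rw [IntermediateField.mem_bot, InfiniteGalois.mem_range_algebraMap_iff_fixed]
  intro g
  simp only [map_sum, map_pow, hx.apply_eq]
  exact Equiv.sum_comp (hx.permHom g) fun i => x i ^ k

theorem exists_isPrimitiveRoot_lagrangeResolvent_ne_zero (hω : IsPrimitiveRoot ω 3) :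
    ∃ η : Ω, IsPrimitiveRoot η 3 ∧ lagrangeResolvent η x ≠ 0 := by
  by_contra! h
  have : NeZero ((3 : ℕ) : Ω) := hω.neZero'
  have h3 : (3 : Ω) ≠ 0 := by exact_mod_cast this.out
  have hadd := lagrangeResolvent_add hω x
  rw [h ω hω, h (ω ^ 2) (hω.pow_of_coprime 2 (by decide)), zero_add, zero_add] at hadd
  obtain ⟨g, hg⟩ := hx.exists_algEquiv (Equiv.swap 0 1)
  have hfix := congr_arg g hadd
  simp only [map_sum, map_mul, map_ofNat, hg] at hfix
  rw [Equiv.sum_comp (Equiv.swap 0 1) x, hadd, Equiv.swap_apply_left] at hfix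
  exact absurd (hx.injective (mul_left_cancel₀ h3 hfix)) (by decide)

variable [IsGalois F Ω] [NeZero (2 : Ω)]

theorem lagrangeResolvent_mul_mem_bot (hω : IsPrimitiveRoot ω 3) :
    lagrangeResolvent ω x * lagrangeResolvent (ω ^ 2) x ∈ (⊥ : IntermediateField F Ω) := by
  rw [← mul_div_cancel_left₀ (_ * _) (two_ne_zero (α := Ω)), two_mul_lagrangeResolvent_mul hω]
  have hsum := hx.sum_pow_mem_bot 1
  simp only [pow_one] at hsum
  exact div_mem (sub_mem (mul_mem (ofNat_mem _ 3) (hx.sum_pow_mem_bot 2)) (pow_mem hsum 2))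
    (ofNat_mem _ 2)

theorem apply_zero_mem_adjoin_lagrangeResolvent (hω : IsPrimitiveRoot ω 3)
    (hu : lagrangeResolvent ω x ≠ 0) : x 0 ∈ F⟮lagrangeResolvent ω x⟯ := by
  have : NeZero ((3 : ℕ) : Ω) := hω.neZero'
  have h3 : (3 : Ω) ≠ 0 := by exact_mod_cast this.out
  have hbot {y : Ω} (hy : y ∈ (⊥ : IntermediateField F Ω)) : y ∈ F⟮lagrangeResolvent ω x⟯ :=
    bot_le (α := IntermediateField F Ω) hy
  have hu_mem := mem_adjoin_simple_self F (lagrangeResolvent ω x)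
  have hsum := hx.sum_pow_mem_bot 1
  simp only [pow_one] at hsum
  have hv : lagrangeResolvent (ω ^ 2) x ∈ F⟮lagrangeResolvent ω x⟯ := by
    rw [← mul_div_cancel_left₀ (lagrangeResolvent (ω ^ 2) x) hu]
    exact div_mem (hbot (hx.lagrangeResolvent_mul_mem_bot hω)) hu_mem
  rw [← mul_div_cancel_left₀ (x 0) h3, ← lagrangeResolvent_add hω]
  exact div_mem (add_mem (add_mem hu_mem hv) (hbot hsum)) (ofNat_mem _ 3)

end IsSymmetricSystem
end Lagrange

section Unique

theorem eq_or_mul_eq_one_of_card_eq_three {G : Type*} [Group G] (hG : Nat.card G = 3) {a b : G}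
    (ha : a ≠ 1) (hb : b ≠ 1) : b = a ∨ b * a = 1 := by
  have := Fact.mk Nat.prime_three
  have ha3 : a ^ 3 = 1 := hG ▸ pow_card_eq_one'
  obtain ⟨k, rfl⟩ := mem_powers_of_prime_card hG ha (g' := b)
  beta_reduce at hb ⊢
  rw [pow_eq_pow_mod k ha3] at hb ⊢
  have hk : k % 3 < 3 := Nat.mod_lt _ (by decide)
  interval_cases k % 3
  · exact absurd (pow_zero a) hb
  · exact .inl (pow_one a)
  · exact .inr (by rw [← pow_succ, ha3])

theorem exists_eq_mul_or_mul_eq_of_index_eq_three {K : Type*} [Field K]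
    (hK : (powMonoidHom 3 : Kˣ →* Kˣ).range.index = 3) {a b : K} (ha : ∀ c : K, c ^ 3 ≠ a)
    (hb : ∀ c, c ^ 3 ≠ b) : ∃ c, b = c ^ 3 * a ∨ b * a = c ^ 3 := by
  have exists_unit {d : K} (hd : ∀ c, c ^ 3 ≠ d) :
      ∃ u : Kˣ, (u : K) = d ∧ (u : Kˣ ⧸ (powMonoidHom 3 : Kˣ →* Kˣ).range) ≠ 1 := by
    have hd0 : d ≠ 0 := by rintro rfl; exact hd 0 (zero_pow three_ne_zero)
    refine ⟨Units.mk0 d hd0, rfl, fun h => ?_⟩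
    obtain ⟨c, hc⟩ := (QuotientGroup.eq_one_iff _).1 h
    exact hd c (congr_arg Units.val hc)
  obtain ⟨u, rfl, hu⟩ := exists_unit ha
  obtain ⟨v, rfl, hv⟩ := exists_unit hb
  rcases eq_or_mul_eq_one_of_card_eq_three hK hu hv with h | h
  · obtain ⟨c, hc⟩ := QuotientGroup.eq.1 h.symm
    have hvu : c ^ 3 * u = v := by rw [show c ^ 3 = u⁻¹ * v from hc, mul_comm, mul_inv_cancel_left]
    exact ⟨c, .inl (congr_arg Units.val hvu).symm⟩
  · obtain ⟨c, hc⟩ := (QuotientGroup.eq_one_iff (v * u)).1 h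
    exact ⟨c, .inr (congr_arg Units.val hc).symm⟩

variable {F Ω : Type*} [Field F] [Field Ω] [Algebra F Ω] {ω : Ω} {x : Fin 3 → Ω}

theorem exists_mem_adjoin_pow_mul_of_pow_eq (hω : IsPrimitiveRoot ω 3)
    (hF : (powMonoidHom 3 : Fˣ →* Fˣ).range.index = 3) {a b : F} (ha : ∀ c : F, c ^ 3 ≠ a)
    (hb : ∀ c : F, c ^ 3 ≠ b) {ρ u : Ω} (hρ : ρ ^ 3 = algebraMap F Ω a)
    (hu : u ^ 3 = algebraMap F Ω b) : ∃ j : Fin 3, u ∈ F⟮ω ^ (j : ℕ) * ρ⟯ := by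
  obtain ⟨c, hc | hc⟩ := exists_eq_mul_or_mul_eq_of_index_eq_three hF ha hb
  · have hpow : u ^ 3 = (algebraMap F Ω c * ρ) ^ 3 := by
      rw [hu, hc, mul_pow, hρ, map_mul, map_pow]
    obtain ⟨j, hj⟩ := exists_eq_pow_mul_of_pow_eq_pow hω hpow
    refine ⟨j, ?_⟩
    rw [hj, mul_left_comm]
    exact mul_mem (_root_.algebraMap_mem _ c) (mem_adjoin_simple_self F _)
  · have hρ0 : ρ ≠ 0 := by
      rintro rfl
      exact ha 0 ((algebraMap F Ω).injective (by simpa using hρ))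
    have hpow : algebraMap F Ω c ^ 3 = (u * ρ) ^ 3 := by
      rw [← map_pow, ← hc, map_mul, mul_pow, hu, hρ]
    obtain ⟨j, hj⟩ := exists_eq_pow_mul_of_pow_eq_pow hω hpow
    have hr0 : ω ^ (j : ℕ) * ρ ≠ 0 := mul_ne_zero (pow_ne_zero _ (hω.ne_zero three_ne_zero)) hρ0
    refine ⟨j, ?_⟩
    rw [show u = algebraMap F Ω c / (ω ^ (j : ℕ) * ρ) by rw [eq_div_iff hr0, hj, mul_left_comm]]
    exact div_mem (_root_.algebraMap_mem _ c) (mem_adjoin_simple_self F _)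

theorem isSymmetricSystem_pair [IsGalois F Ω] {y w : Ω} (hy : y ∉ (⊥ : IntermediateField F Ω))
    (h : ∀ g : Ω ≃ₐ[F] Ω, g y = y ∨ g y = w) : IsSymmetricSystem F ![y, w] := by
  rw [IntermediateField.mem_bot, InfiniteGalois.mem_range_algebraMap_iff_fixed, not_forall] at hy
  obtain ⟨t, hty⟩ := hy
  obtain rfl := (h t).resolve_left hty
  have map_eq_of_ne {g : Ω ≃ₐ[F] Ω} (hg : g y ≠ y) : g y = t y ∧ g (t y) = y := by
    have hgy := (h g).resolve_left hg
    exact ⟨hgy, (h (g * t)).resolve_right fun hgt => hty (g.injective (hgt.trans hgy.symm))⟩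
  have map_eq_of_eq {g : Ω ≃ₐ[F] Ω} (hg : g y = y) : g (t y) = t y :=
    (h (g * t)).resolve_left fun hgt => hty (g.injective (hgt.trans hg.symm))
  refine ⟨?_, fun g => ?_, fun σ => ?_⟩
  · simpa [Function.Injective, Fin.forall_fin_two, eq_comm] using hty
  · by_cases hg : g y = y
    · exact ⟨1, by simp [Fin.forall_fin_two, hg, map_eq_of_eq hg]⟩
    · exact ⟨Equiv.swap 0 1, by simp [Fin.forall_fin_two, map_eq_of_ne hg]⟩
  · obtain rfl | rfl : σ = 1 ∨ σ = Equiv.swap 0 1 := by revert σ; decide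
    · exact ⟨1, fun _ => rfl⟩
    · exact ⟨t, by simp [Fin.forall_fin_two, (map_eq_of_ne hty).2]⟩

namespace IsSymmetricSystem
variable (hx : IsSymmetricSystem F x) (hω : IsPrimitiveRoot ω 3)
include hx hω

theorem pow_ne_lagrangeResolvent_pow (hu : lagrangeResolvent ω x ≠ 0)
    (c : F⟮lagrangeResolvent ω x ^ 3⟯) : (c : Ω) ^ 3 ≠ lagrangeResolvent ω x ^ 3 := by
  intro hc
  obtain ⟨t, ht⟩ := hx.permHom_surjective (Equiv.addLeft 2)
  have hσ : hx.permHom (t * t) = Equiv.addLeft 1 := by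
    rw [map_mul, ht]; decide
  have hgω : (t * t) ω = ω := by
    rcases algEquiv_apply_eq_or_eq_sq hω t with h | h
    · simp [h]
    · rw [AlgEquiv.mul_apply, h, map_pow, h, sq_sq_of_pow_three_eq_one hω.pow_eq_one]
  have hgc : (t * t) c = c := by
    refine (IntermediateField.mem_fixingSubgroup_iff _ _).1 ?_ _ c.2
    rw [mem_fixingSubgroup_adjoin_iff]
    rintro _ rfl
    exact hx.map_lagrangeResolvent_pow_eq_self hω (by simpa [hgω, hσ] using by decide)
  obtain ⟨j, hj⟩ := exists_eq_pow_mul_of_pow_eq_pow hω hc.symm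
  have hgu : (t * t) (lagrangeResolvent ω x) = lagrangeResolvent ω x := by
    rw [hj, map_mul, map_pow, hgω, hgc]
  have hrot := pow_mul_lagrangeResolvent_comp_addLeft hω.pow_eq_one x 1
  rw [← hσ, ← congr_arg (lagrangeResolvent · _) hgω, ← hx.map_lagrangeResolvent_eq, hgu] at hrot
  exact hω.ne_one (by decide) (mul_right_cancel₀ hu (by simpa using hrot))

variable [IsGalois F Ω]

theorem not_exists_isPrimitiveRoot_adjoin_lagrangeResolvent_pow
    (hF : ¬ ∃ ζ : F, IsPrimitiveRoot ζ 3) :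
    ¬ ∃ ζ : F⟮lagrangeResolvent ω x ^ 3⟯, IsPrimitiveRoot ζ 3 := by
  rintro ⟨ζ, hζ⟩
  have hω2 : ω ^ 2 ≠ ω := fun h =>
    hω.ne_one (by decide) (mul_left_cancel₀ (hω.ne_zero three_ne_zero) (by rw [← sq, h, mul_one]))
  obtain ⟨g, hgω, hσ⟩ : ∃ g : Ω ≃ₐ[F] Ω, g ω = ω ^ 2 ∧ Equiv.Perm.sign (hx.permHom g) = -1 := by
    obtain ⟨g, hg⟩ := exists_algEquiv_apply_eq_sq hω hF
    obtain ⟨t, ht⟩ := hx.permHom_surjective (Equiv.swap 0 1)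
    rcases Int.units_eq_one_or (Equiv.Perm.sign (hx.permHom g)) with hσ | hσ
    · rcases algEquiv_apply_eq_or_eq_sq hω t with h | h
      · exact ⟨g * t, by simp [h, hg], by simp [hσ, ht]⟩
      · exact ⟨t, h, by simp [ht]⟩
    · exact ⟨g, hg, hσ⟩
  have hgζ : g ζ = ζ := by
    refine (IntermediateField.mem_fixingSubgroup_iff _ _).1 ?_ _ ζ.2
    rw [mem_fixingSubgroup_adjoin_iff]
    rintro _ rfl
    exact hx.map_lagrangeResolvent_pow_eq_self hω (by simp [hσ, hgω, hω2])
  have hζΩ : IsPrimitiveRoot (ζ : Ω) 3 :=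
    hζ.map_of_injective (f := F⟮lagrangeResolvent ω x ^ 3⟯.val) Subtype.val_injective
  rcases eq_or_eq_sq_of_isPrimitiveRoot_three hω hζΩ with h | h
  · rw [h, hgω] at hgζ
    exact hω2 hgζ
  · rw [h, map_pow, hgω, sq_sq_of_pow_three_eq_one hω.pow_eq_one] at hgζ
    exact hω2 hgζ.symm

variable [NeZero (2 : Ω)] [IsAlgClosed Ω]

theorem lagrangeResolvent_pow_mem_bot (hF : (powMonoidHom 3 : Fˣ →* Fˣ).range.index = 3)
    (hK : (powMonoidHom 3 : F⟮lagrangeResolvent ω x ^ 3⟯ˣ →* _).range.index = 3)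
    (hu : lagrangeResolvent ω x ≠ 0) :
    lagrangeResolvent ω x ^ 3 ∈ (⊥ : IntermediateField F Ω) := by
  by_contra hmem
  have hpair : IsSymmetricSystem F ![lagrangeResolvent ω x ^ 3, lagrangeResolvent (ω ^ 2) x ^ 3] :=
    isSymmetricSystem_pair hmem fun g =>
      (em _).imp (hx.map_lagrangeResolvent_pow_eq_self hω) (hx.map_lagrangeResolvent_pow_eq_sq hω)
  have : FiniteDimensional F F⟮lagrangeResolvent ω x ^ 3⟯ :=
    adjoin.finiteDimensional (Algebra.IsIntegral.isIntegral _)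
  have hcoprime : (Module.finrank F F⟮lagrangeResolvent ω x ^ 3⟯).Coprime 3 := by
    have hfinrank : Module.finrank F F⟮lagrangeResolvent ω x ^ 3⟯ = 2 :=
      hpair.finrank_adjoin_simple 0
    rw [hfinrank]; decide
  have hrel := relIndex_normPowUnits_mul_index hcoprime
  rw [hF, hK, Nat.mul_eq_right three_ne_zero, Subgroup.relIndex_eq_one] at hrel
  let α : F⟮lagrangeResolvent ω x ^ 3⟯ˣ := Units.mk0 (AdjoinSimple.gen F _) fun h =>
    pow_ne_zero 3 hu (congr_arg Subtype.val h)
  have hα : α ∈ normPowUnits F F⟮lagrangeResolvent ω x ^ 3⟯ 3 := by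
    obtain ⟨p, hp⟩ := IntermediateField.mem_bot.1 (hx.lagrangeResolvent_mul_mem_bot hω)
    have hnorm : Algebra.norm F (α : F⟮lagrangeResolvent ω x ^ 3⟯) = p ^ 3 := by
      refine (algebraMap F Ω).injective ?_
      have hprod := hpair.algebraMap_norm_of_eq (i := 0) (E := F⟮lagrangeResolvent ω x ^ 3⟯) rfl
        (α := (α : F⟮lagrangeResolvent ω x ^ 3⟯)) rfl
      rw [hprod, map_pow, hp, mul_pow]
      exact Fin.prod_univ_two _
    have hp0 : p ≠ 0 := ne_zero_of_map (f := powMonoidWithZeroHom three_ne_zero) <| by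
      simpa [hnorm] using Algebra.norm_ne_zero_iff (R := F).2 α.ne_zero
    exact ⟨Units.mk0 p hp0, Units.ext hnorm.symm⟩
  obtain ⟨c, hc⟩ := hrel hα
  exact hx.pow_ne_lagrangeResolvent_pow hω hu c (congr_arg (fun u => ((u : _ˣ) : Ω)) hc)

theorem exists_apply_mem_adjoin_pow_mul {a : F} {ρ : Ω} (ha : ∀ b : F, b ^ 3 ≠ a)
    (hρ : ρ ^ 3 = algebraMap F Ω a) (hF : ¬ ∃ ζ : F, IsPrimitiveRoot ζ 3)
    (hFcube : (powMonoidHom 3 : Fˣ →* Fˣ).range.index = 3)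
    (hcube : ∀ K : IntermediateField F Ω, FiniteDimensional F K →
      (¬ ∃ ζ : K, IsPrimitiveRoot ζ 3) → (powMonoidHom 3 : Kˣ →* Kˣ).range.index = 3) :
    ∃ i, x i ∈ F⟮ω ^ ((0 : Fin 3) : ℕ) * ρ⟯ := by
  have hr := isSymmetricSystem_pow_mul hω ha hρ hF
  obtain ⟨η, hη, hu⟩ := hx.exists_isPrimitiveRoot_lagrangeResolvent_ne_zero hω
  set u := lagrangeResolvent η x
  have : FiniteDimensional F F⟮u ^ 3⟯ :=
    adjoin.finiteDimensional (Algebra.IsIntegral.isIntegral _)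
  obtain ⟨b, hb⟩ := IntermediateField.mem_bot.1 <| hx.lagrangeResolvent_pow_mem_bot hη hFcube
    (hcube _ this (hx.not_exists_isPrimitiveRoot_adjoin_lagrangeResolvent_pow hη hF)) hu
  have hb_ne (c : F) : c ^ 3 ≠ b := by
    rintro rfl
    exact hx.pow_ne_lagrangeResolvent_pow hη hu (algebraMap F _ c) (by rw [← hb, map_pow]; rfl)
  obtain ⟨j, hj⟩ := exists_mem_adjoin_pow_mul_of_pow_eq hω hFcube ha hb_ne hρ hb.symm
  obtain ⟨g, hg⟩ := hr.exists_algEquiv (Equiv.swap j 0)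
  have hxj : x 0 ∈ F⟮ω ^ (j : ℕ) * ρ⟯ :=
    adjoin_simple_le_iff.2 hj (hx.apply_zero_mem_adjoin_lagrangeResolvent hη hu)
  refine ⟨hx.permHom g 0, ?_⟩
  have hmap : g (x 0) ∈ F⟮ω ^ (j : ℕ) * ρ⟯.map (g : Ω →ₐ[F] Ω) := ⟨_, hxj, rfl⟩
  have hgj : g (ω ^ (j : ℕ) * ρ) = ω ^ ((0 : Fin 3) : ℕ) * ρ := by
    rw [hg j, Equiv.swap_apply_left]
  rw [adjoin_map, Set.image_singleton, AlgEquiv.coe_toAlgHom, hgj, hx.apply_eq] at hmap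
  exact hmap

end IsSymmetricSystem
end Unique

theorem exists_forall_pow_three_ne {K : Type*} [Field K]
    (hK : (powMonoidHom 3 : Kˣ →* Kˣ).range.index = 3) : ∃ a : K, ∀ c : K, c ^ 3 ≠ a := by
  obtain ⟨a, -, ha⟩ := SetLike.exists_of_lt <| lt_top_iff_ne_top.2 <|
    mt Subgroup.index_eq_one.2 (hK.trans_ne (by decide))
  refine ⟨a, fun c hc => ha ?_⟩
  have hc0 : c ≠ 0 := ne_zero_pow three_ne_zero (hc ▸ a.ne_zero)
  exact ⟨Units.mk0 c hc0, Units.ext hc⟩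

theorem relIndex_normPowUnits_two {F K : Type*} [Field F] [Field K] [Algebra ℚ_[2] F]
    [FiniteDimensional ℚ_[2] F] [Algebra F K] (hK : Module.finrank F K = 3) :
    (powMonoidHom 2 : Kˣ →* Kˣ).range.relIndex (normPowUnits F K 2) =
      2 ^ (2 * Module.finrank ℚ_[2] F) := by
  let : Algebra ℚ_[2] K := ((algebraMap F K).comp (algebraMap ℚ_[2] F)).toAlgebra
  have : IsScalarTower ℚ_[2] F K := .of_algebraMap_eq fun _ => rfl
  have : FiniteDimensional F K := Module.finite_of_finrank_pos (by omega)
  have : FiniteDimensional ℚ_[2] K := .trans ℚ_[2] F K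
  have hindex := relIndex_normPowUnits_mul_index (F := F) (K := K) (n := 2) (by rw [hK]; decide)
  rw [index_range_sq_units, index_range_sq_units, ← Module.finrank_mul_finrank ℚ_[2] F K, hK]
    at hindex
  refine Nat.eq_of_mul_eq_mul_right (Nat.two_pow_pos (Module.finrank ℚ_[2] F + 2)) ?_
  rw [hindex, ← pow_add]
  congr 1
  ring

theorem index_range_cube_units_of_finite (F : Type*) {K : Type*} [Field F] [Field K]
    [Algebra ℚ_[2] F] [FiniteDimensional ℚ_[2] F] [Algebra F K] [FiniteDimensional F K]
    (h : ¬ ∃ ζ : K, IsPrimitiveRoot ζ 3) :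
    (powMonoidHom 3 : Kˣ →* Kˣ).range.index = 3 := by
  let : Algebra ℚ_[2] K := ((algebraMap F K).comp (algebraMap ℚ_[2] F)).toAlgebra
  have : IsScalarTower ℚ_[2] F K := .of_algebraMap_eq fun _ => rfl
  have : FiniteDimensional ℚ_[2] K := .trans ℚ_[2] F K
  exact index_range_cube_units h

theorem stmt9_general (F : Type*) [Field F] [Algebra ℚ_[2] F] [FiniteDimensional ℚ_[2] F]
    (m : ℕ) (hm : Module.finrank ℚ_[2] F = m) (hμ3 : ¬ ∃ ζ : F, IsPrimitiveRoot ζ 3) :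
    nu F (Equiv.Perm (Fin 4)) = 2 ^ (2 * m) - 1 := by
  have : CharZero F := charZero_of_injective_algebraMap (algebraMap ℚ_[2] F).injective
  have : CharZero (AlgebraicClosure F) :=
    charZero_of_injective_algebraMap (algebraMap F (AlgebraicClosure F)).injective
  have : IsGalois F (AlgebraicClosure F) := ⟨⟩
  have hcube := index_range_cube_units hμ3
  obtain ⟨ω, hω⟩ := HasEnoughRootsOfUnity.exists_primitiveRoot (AlgebraicClosure F) 3
  obtain ⟨a, ha⟩ := exists_forall_pow_three_ne hcube
  obtain ⟨ρ, hρ⟩ := IsAlgClosed.exists_pow_nat_eq (algebraMap F (AlgebraicClosure F) a) three_pos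
  have hr := isSymmetricSystem_pow_mul hω ha hρ hμ3
  rw [nu, hr.card_isGalois_mulEquiv_perm_fin_four fun x hx =>
    hx.exists_apply_mem_adjoin_pow_mul hω ha hρ hμ3 hcube fun K _ =>
      index_range_cube_units_of_finite F,
    relIndex_normPowUnits_two (hr.finrank_adjoin_simple 0), hm]

/-- The condition `f = 1` (residue degree one) is expressed by saying that the residue
field of the ring of integers of `F` (the integral closure of `ℤ₂` in `F`) has exactly
`2 = 2 ^ 1` elements. -/
theorem stmt9 (F : Type*) [Field F] [Algebra ℚ_[2] F] [FiniteDimensional ℚ_[2] F]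
    [Algebra ℤ_[2] F] [IsScalarTower ℤ_[2] ℚ_[2] F]
    [IsLocalRing (integralClosure ℤ_[2] F)]
    (m : ℕ) (hm : Module.finrank ℚ_[2] F = m)
    (hμ3 : ¬ ∃ ζ : F, IsPrimitiveRoot ζ 3)
    (hnot : ¬ ((¬ ∃ ζ : F, IsPrimitiveRoot ζ 4) ∧ Even m ∧
      Nat.card (IsLocalRing.ResidueField (integralClosure ℤ_[2] F)) = 2)) :
    nu F (Equiv.Perm (Fin 4)) = 2 ^ (2 * m) - 1 :=
  stmt9_general F m hm hμ3
end
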